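/- Let K be an algebraically closed field and Δ a simplicial complex on a finite vertex set X. If the Stanley-Reisner ring K[Δ] has a 2-linear resolution, then ara I_Δ = pd K[Δ]. -/

import Mathlib

open MvPolynomial

variable {V : Type*} [DecidableEq V]

def IsSimplicialComplex (Δ : Set (Finset V)) : Prop :=
  (∀ v : V, ({v} : Finset V) ∈ Δ) ∧ ∀ F ∈ Δ, ∀ G ⊆ F, G ∈ Δ

noncomputable def srIdeal (K : Type*) [Field K] (Δ : Set (Finset V)) :
    Ideal (MvPolynomial V K) :=
  Ideal.span ((fun S : Finset V => ∏ v ∈ S, (X v : MvPolynomial V K)) '' {S | S ∉ Δ})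

/-- A generalized tree on the vertex set `W ⊆ V`: either a simplex on `W`, or obtained
from a generalized tree by adding a cone over one of its faces from a new vertex. -/
inductive IsGeneralizedTree : Finset V → Set (Finset V) → Prop
  | simplex (W : Finset V) : IsGeneralizedTree W {S | S ⊆ W}
  | cone (W : Finset V) (Δ : Set (Finset V)) (F : Finset V) (x : V)
      (hΔ : IsGeneralizedTree W Δ) (hF : F ∈ Δ) (hx : x ∉ W) :
      IsGeneralizedTree (insert x W) (Δ ∪ {S | S ⊆ insert x F})

/-- `K[Δ]` has a 2-linear resolution: there is a graded free resolution
`… → F₂ → F₁ → F₀ = R → K[Δ] → 0` in which `F₀ = R` (one generator in degree `0`) and,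
for `i ≥ 1`, `Fᵢ` is generated in degree `i + 1`; equivalently the entries of the matrix
of `F₁ → F₀` are homogeneous of degree `2` and all further matrices have entries
homogeneous of degree `1`. -/
def HasTwoLinearResolution (K : Type*) [Field K] (Δ : Set (Finset V)) : Prop :=
  ∃ (ι : ℕ → Type) (_ : ∀ i, Finite (ι i)) (u : Unique (ι 0))
    (d : ∀ i : ℕ, ((ι (i + 1) →₀ MvPolynomial V K) →ₗ[MvPolynomial V K]
      (ι i →₀ MvPolynomial V K)))
    (ε : ((ι 0 →₀ MvPolynomial V K) →ₗ[MvPolynomial V K]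
      (MvPolynomial V K ⧸ srIdeal K Δ))),
    ε (Finsupp.single u.default 1) = 1 ∧
    Function.Surjective ε ∧
    LinearMap.ker ε = LinearMap.range (d 0) ∧
    (∀ i : ℕ, LinearMap.ker (d i) = LinearMap.range (d (i + 1))) ∧
    (∀ (b : ι 1) (c : ι 0),
      ((d 0) (Finsupp.single b 1)) c ∈ homogeneousSubmodule V K 2) ∧
    (∀ (i : ℕ) (b : ι (i + 2)) (c : ι (i + 1)),
      ((d (i + 1)) (Finsupp.single b 1)) c ∈ homogeneousSubmodule V K 1)

open CategoryTheory

/-- The arithmetical rank of an ideal: the least number of elements generating it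
up to radical. -/
noncomputable def ara {R : Type*} [CommRing R] (I : Ideal R) : ℕ :=
  sInf {s : ℕ | ∃ a : Fin s → R, (Ideal.span (Set.range a)).radical = I.radical}

/-- The projective dimension of a module: the least `n` for which `M` admits a projective
resolution vanishing in homological degrees `> n`. -/
noncomputable def projDim {R : Type*} [CommRing R] (M : ModuleCat R) : ℕ :=
  sInf {m : ℕ | ∃ P : ProjectiveResolution M, ∀ i : ℕ, m < i → Limits.IsZero (P.complex.X i)}


open CategoryTheory CategoryTheory.Abelian
universe u
section PartA
variable {R : Type u} [CommRing R]

/-- short complex from linear maps -/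
abbrev mkS {A B C : Type u} [AddCommGroup A] [AddCommGroup B] [AddCommGroup C]
    [Module R A] [Module R B] [Module R C] (f : A →ₗ[R] B) (g : B →ₗ[R] C)
    (h : Function.Exact f g) : ShortComplex (ModuleCat.{u} R) :=
  ShortComplex.mk (ModuleCat.ofHom f) (ModuleCat.ofHom g) (by
    ext x; exact h.apply_apply_eq_zero x)

theorem mkS_exact {A B C : Type u} [AddCommGroup A] [AddCommGroup B] [AddCommGroup C]
    [Module R A] [Module R B] [Module R C] {f : A →ₗ[R] B} {g : B →ₗ[R] C}
    (h : Function.Exact f g) (hf : Function.Injective f) (hg : Function.Surjective g) :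
    (mkS f g h).ShortExact := by
  refine ShortComplex.ShortExact.mk' ?_ ((ModuleCat.mono_iff_injective _).2 hf) ((ModuleCat.epi_iff_surjective _).2 hg)
  rw [ShortComplex.moduleCat_exact_iff]
  intro x hx
  exact (h x).1 hx

/-- pullback of an ext class along a linear map -/
noncomputable def pb {A B : Type u} [AddCommGroup A] [AddCommGroup B] [Module R A] [Module R B]
    {M : ModuleCat.{u} R} {i : ℕ} (f : A →ₗ[R] B) (θ : Ext (ModuleCat.of R B) M i) :
    Ext (ModuleCat.of R A) M i := (Ext.mk₀ (ModuleCat.ofHom f)).comp θ (zero_add i)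

theorem pb_comp {A B C : Type u} [AddCommGroup A] [AddCommGroup B] [AddCommGroup C]
    [Module R A] [Module R B] [Module R C]
    {M : ModuleCat.{u} R} {i : ℕ} (f : A →ₗ[R] B) (g : B →ₗ[R] C)
    (θ : Ext (ModuleCat.of R C) M i) : pb (g ∘ₗ f) θ = pb f (pb g θ) := by
  simp [pb, ModuleCat.ofHom_comp]

theorem pb_zero {A B : Type u} [AddCommGroup A] [AddCommGroup B] [Module R A] [Module R B]
    {M : ModuleCat.{u} R} {i : ℕ} (f : A →ₗ[R] B) : pb f (0 : Ext (ModuleCat.of R B) M i) = 0 := by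
  simp [pb]

/-- exactness at X3 plus naturality, packaged: if `θ` on `C` dies on `B` then there is `φ` on `A`
such that for any map of short exact sequences into it, if `φ` dies on `A'` then `θ` dies on `C'`. -/
theorem pb_package {A B C : Type u} [AddCommGroup A] [AddCommGroup B] [AddCommGroup C]
    [Module R A] [Module R B] [Module R C] {f : A →ₗ[R] B} {g : B →ₗ[R] C}
    (h : Function.Exact f g) (hf : Function.Injective f) (hg : Function.Surjective g)
    {M : ModuleCat.{u} R} {i : ℕ} (θ : Ext (ModuleCat.of R C) M (i+1)) (hθ : pb g θ = 0) :
    ∃ φ : Ext (ModuleCat.of R A) M i, ∀ (A' B' C' : Type u) [AddCommGroup A'] [AddCommGroup B']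
      [AddCommGroup C'] [Module R A'] [Module R B'] [Module R C'] (f' : A' →ₗ[R] B')
      (g' : B' →ₗ[R] C') (_ : Function.Exact f' g') (_ : Function.Injective f')
      (_ : Function.Surjective g') (a : A' →ₗ[R] A) (b : B' →ₗ[R] B) (c : C' →ₗ[R] C)
      (_ : f ∘ₗ a = b ∘ₗ f') (_ : g ∘ₗ b = c ∘ₗ g'), pb a φ = 0 → pb c θ = 0 := by
  obtain ⟨φ, hφ⟩ := Ext.contravariant_sequence_exact₃ (mkS_exact h hf hg) M θ hθ (n₀ := i) (by omega)
  refine ⟨φ, ?_⟩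
  intro A' B' C' _ _ _ _ _ _ f' g' h' hf' hg' a b c h1 h2 h0
  let τ : mkS f' g' h' ⟶ mkS f g h :=
    { τ₁ := ModuleCat.ofHom a, τ₂ := ModuleCat.ofHom b, τ₃ := ModuleCat.ofHom c
      comm₁₂ := by
        ext x; exact LinearMap.congr_fun h1 x
      comm₂₃ := by
        ext x; exact LinearMap.congr_fun h2 x }
  have nat := ShortComplex.ShortExact.extClass_naturality (mkS_exact h' hf' hg') (mkS_exact h hf hg) τ
  have : pb c θ = (Ext.mk₀ τ.τ₃).comp θ (zero_add _) := rfl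
  rw [this, ← hφ, ← Ext.comp_assoc (a₁₂ := 1) _ _ _ (by omega) (by omega) (by omega), ← nat,
    Ext.comp_assoc (a₂₃ := i) _ _ _ (by omega) (by omega) (by omega)]
  have : (Ext.mk₀ τ.τ₁).comp φ (zero_add _) = 0 := h0
  rw [this, Ext.comp_zero]

/-- Pullback along an epi is injective if `Ext^{i}` of the kernel vanishes. -/
theorem pb_inj {A B C : Type u} [AddCommGroup A] [AddCommGroup B] [AddCommGroup C]
    [Module R A] [Module R B] [Module R C] {f : A →ₗ[R] B} {g : B →ₗ[R] C}
    (h : Function.Exact f g) (hf : Function.Injective f) (hg : Function.Surjective g)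
    {M : ModuleCat.{u} R} {i : ℕ} (hA : ∀ φ : Ext (ModuleCat.of R A) M i, φ = 0)
    (θ : Ext (ModuleCat.of R C) M (i+1)) (hθ : pb g θ = 0) : θ = 0 := by
  obtain ⟨φ, hφ⟩ := Ext.contravariant_sequence_exact₃ (mkS_exact h hf hg) M θ hθ (n₀ := i) (by omega)
  rw [← hφ, hA φ, Ext.comp_zero]

/-- Cohomological dimension bound, effaceability form. -/
def CdLE (M : ModuleCat.{u} R) (I : Ideal R) (s : ℕ) : Prop :=
  ∀ (N : Type u) [AddCommGroup N] [Module R N] [Module.Finite R N],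
    I ≤ (Module.annihilator R N).radical → ∀ i, s < i → ∀ θ : Ext (ModuleCat.of R N) M i,
    ∃ (N' : Type u) (_ : AddCommGroup N') (_ : Module R N') (_ : Module.Finite R N')
      (π : N' →ₗ[R] N), Function.Surjective π ∧ I ≤ (Module.annihilator R N').radical ∧ pb π θ = 0

theorem CdLE.congr {M : ModuleCat.{u} R} {I J : Ideal R} {s : ℕ} (h : CdLE M I s)
    (hIJ : I.radical = J.radical) : CdLE M J s := by
  have key : ∀ A : Ideal R, J ≤ A.radical ↔ I ≤ A.radical := by
    intro A
    have hA := Ideal.radical_isRadical A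
    rw [← Ideal.IsRadical.radical_le_iff (I := J) hA, ← hIJ, hA.radical_le_iff]
  intro N _ _ _ hN i hi θ
  obtain ⟨N', a, b, c, π, h1, h2, h3⟩ := h N ((key _).1 hN) i hi θ
  exact ⟨N', a, b, c, π, h1, (key _).2 h2, h3⟩

theorem cdLE_bot (M : ModuleCat.{u} R) : CdLE M (⊥ : Ideal R) 0 := by
  intro N _ _ _ hN i hi θ
  obtain ⟨n, π, hπ⟩ := Module.Finite.exists_fin' R N
  refine ⟨Fin n → R, inferInstance, inferInstance, inferInstance, π, hπ, bot_le, ?_⟩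
  have : Projective (ModuleCat.of R (Fin n → R)) := ModuleCat.projective_of_free (Pi.basisFun R (Fin n))
  exact Ext.eq_zero_of_hasProjectiveDimensionLT _ 1 hi


theorem factor_range {A B C : Type u} [AddCommGroup A] [AddCommGroup B] [AddCommGroup C]
    [Module R A] [Module R B] [Module R C] (m : A →ₗ[R] B) (g : A →ₗ[R] C)
    (h : LinearMap.ker m ≤ LinearMap.ker g) :
    ∃ a' : LinearMap.range m →ₗ[R] C, ∀ p, a' (m.rangeRestrict p) = g p := by
  refine ⟨(LinearMap.ker m).liftQ g h ∘ₗ m.quotKerEquivRange.symm.toLinearMap, fun p => ?_⟩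
  have : m.quotKerEquivRange.symm (m.rangeRestrict p) = (LinearMap.ker m).mkQ p := by
    rw [LinearEquiv.symm_apply_eq]; rfl
  simp only [LinearMap.comp_apply, LinearEquiv.coe_coe, this]
  exact Submodule.liftQ_apply _ _ _

theorem fibre_aux [IsNoetherianRing R] {N' L2 : Type u} [AddCommGroup N'] [Module R N']
    [Module.Finite R N'] [AddCommGroup L2] [Module R L2] [Module.Finite R L2] (f : R) (k r : ℕ)
    (L : Submodule R N') (hL : ∀ n : N', f ^ k • n ∈ L) (ρ : L2 →ₗ[R] L)
    (hρ : Function.Surjective ρ) (hr : ∀ l : L2, f ^ (r + k) • l = 0 → f ^ r • l = 0) :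
    ∃ (P : Submodule R (N' × L2)) (p1 : P →ₗ[R] N') (Q : Submodule R P) (a' : Q →ₗ[R] L2),
      Function.Surjective p1 ∧ L.subtype ∘ₗ (ρ ∘ₗ a') = p1 ∘ₗ Q.subtype ∧ Q ≤ L.comap p1 ∧
      ∀ p : P, f ^ (r + k) • p ∈ Q := by
  let mk' : N' →ₗ[R] N' := LinearMap.lsmul R N' (f ^ k)
  -- the fibre product
  let P : Submodule R (N' × L2) :=
    LinearMap.ker (mk' ∘ₗ LinearMap.fst R N' L2 - L.subtype ∘ₗ ρ ∘ₗ LinearMap.snd R N' L2)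
  have hP : ∀ p : P, f ^ k • p.1.1 = (ρ p.1.2 : N') := by
    intro p
    have := p.2
    simp only [P, LinearMap.mem_ker, LinearMap.sub_apply, LinearMap.comp_apply, sub_eq_zero] at this
    exact this
  let p1 : P →ₗ[R] N' := LinearMap.fst R N' L2 ∘ₗ P.subtype
  let p2 : P →ₗ[R] L2 := LinearMap.snd R N' L2 ∘ₗ P.subtype
  have hp1 : Function.Surjective p1 := by
    intro n
    obtain ⟨l, hl⟩ := hρ ⟨mk' n, hL n⟩
    refine ⟨⟨(n, l), ?_⟩, rfl⟩
    simp only [P, LinearMap.mem_ker, LinearMap.sub_apply, LinearMap.comp_apply, sub_eq_zero]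
    change mk' n = (ρ l : N')
    rw [hl]
  let mP : P →ₗ[R] P := LinearMap.lsmul R P (f ^ (r + k))
  let Q : Submodule R P := LinearMap.range mP
  -- the map Q → L2
  have hker : LinearMap.ker mP ≤ LinearMap.ker ((f ^ r) • p2) := by
    intro p hp
    have hp' : f ^ (r + k) • p = 0 := LinearMap.mem_ker.1 hp
    rw [LinearMap.mem_ker]
    apply hr
    have := congrArg p2 hp'
    simpa using this
  obtain ⟨a', ha'⟩ := factor_range mP ((f ^ r) • p2) hker
  have hcomm : L.subtype ∘ₗ (ρ ∘ₗ a') = p1 ∘ₗ Q.subtype := by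
    ext q
    obtain ⟨p, rfl⟩ := mP.surjective_rangeRestrict q
    rw [LinearMap.comp_apply, LinearMap.comp_apply, ha', LinearMap.smul_apply, map_smul]
    change f ^ r • (ρ p.1.2 : N') = p1 (f ^ (r + k) • p)
    rw [← hP, map_smul, smul_smul, pow_add]
    rfl
  have hQL : Q ≤ L.comap p1 := by
    intro q hq
    have := LinearMap.congr_fun hcomm ⟨q, hq⟩
    change p1 q ∈ L
    have h2 : p1 q = ((ρ (a' ⟨q, hq⟩) : L) : N') := this.symm
    rw [h2]
    exact Subtype.mem _
  exact ⟨P, p1, Q, a', hp1, hcomm, hQL, fun p => ⟨p, rfl⟩⟩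

theorem CdLE.sup_span [IsNoetherianRing R] {M : ModuleCat.{u} R} {I : Ideal R} {s : ℕ}
    (h : CdLE M I s) (f : R) : CdLE M (I ⊔ Ideal.span {f}) (s + 1) := by
  intro N _ _ _ hN i hi θ
  obtain ⟨i, rfl⟩ : ∃ j, i = j + 1 := ⟨i - 1, by omega⟩
  obtain ⟨N', _, _, _, π, hπ, hN', h0⟩ := h N (le_sup_left.trans hN) (i + 1) (by omega) θ
  have hfN : f ∈ (Module.annihilator R N).radical :=
    hN (Ideal.mem_sup_right (Ideal.mem_span_singleton_self f))
  obtain ⟨k, hk⟩ := hfN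
  rw [Module.mem_annihilator] at hk
  -- `L = f^k N'`
  let mk' : N' →ₗ[R] N' := LinearMap.lsmul R N' (f ^ k)
  let L : Submodule R N' := LinearMap.range mk'
  have hLk : L ≤ LinearMap.ker π := by
    rintro _ ⟨n, rfl⟩
    simp [mk', hk]
  let π' : (N' ⧸ L) →ₗ[R] N := L.liftQ π hLk
  obtain ⟨φ, hφ⟩ := pb_package (f := L.subtype) (g := L.mkQ) (LinearMap.exact_subtype_mkQ L)
    L.subtype_injective L.mkQ_surjective (pb π' θ) (by
      rw [← pb_comp]
      have : π' ∘ₗ L.mkQ = π := L.liftQ_mkQ π hLk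
      rw [this, h0])
  have hLtors : I ≤ (Module.annihilator R L).radical :=
    hN'.trans (Ideal.radical_mono (L.subtype.annihilator_le_of_injective L.subtype_injective))
  obtain ⟨L2, _, _, _, ρ, hρ, hL2, hφ0⟩ := h L hLtors i (by omega) φ
  -- stable torsion index on L2
  obtain ⟨r, hr⟩ : ∃ r, ∀ l : L2, f ^ (r + k) • l = 0 → f ^ r • l = 0 := by
    have hmono : Monotone (fun n : ℕ => LinearMap.ker (LinearMap.lsmul R L2 (f ^ n))) := by
      intro a b hab x hx
      simp only [LinearMap.mem_ker, LinearMap.lsmul_apply] at hx ⊢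
      obtain ⟨c, rfl⟩ := Nat.exists_eq_add_of_le hab
      rw [pow_add, mul_comm, mul_smul, hx, smul_zero]
    obtain ⟨r, hr⟩ := monotone_stabilizes_iff_noetherian.2 (inferInstance : IsNoetherian R L2)
      ⟨_, hmono⟩
    refine ⟨r, fun l hl => ?_⟩
    have this : LinearMap.ker (LinearMap.lsmul R L2 (f ^ r)) =
        LinearMap.ker (LinearMap.lsmul R L2 (f ^ (r + k))) := hr (r + k) (by omega)
    have h2 : l ∈ LinearMap.ker (LinearMap.lsmul R L2 (f ^ r)) := by
      have h3 : l ∈ LinearMap.ker (LinearMap.lsmul R L2 (f ^ (r + k))) := hl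
      rw [this]; exact h3
    exact h2
  obtain ⟨P, p1, Q, a', hp1, hcomm, hQL, hPQ⟩ := fibre_aux f k r L (fun n => ⟨n, rfl⟩) ρ hρ hr
  let c : (P ⧸ Q) →ₗ[R] (N' ⧸ L) := Q.mapQ L p1 hQL
  have hfin := hφ Q P (P ⧸ Q) Q.subtype Q.mkQ (LinearMap.exact_subtype_mkQ Q)
    Q.subtype_injective Q.mkQ_surjective (ρ ∘ₗ a') p1 c hcomm (by ext; rfl) (by
      rw [pb_comp, hφ0, pb_zero])
  refine ⟨P ⧸ Q, inferInstance, inferInstance, inferInstance, π' ∘ₗ c, ?_, ?_, ?_⟩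
  · intro n
    obtain ⟨n', rfl⟩ := hπ n
    obtain ⟨p, rfl⟩ := hp1 n'
    exact ⟨Q.mkQ p, rfl⟩
  · apply sup_le
    · intro x hx
      obtain ⟨m1, hm1⟩ := hN' hx
      obtain ⟨m2, hm2⟩ := hL2 hx
      rw [Module.mem_annihilator] at hm1 hm2
      refine ⟨m1 + m2, ?_⟩
      rw [Module.mem_annihilator]
      intro q
      obtain ⟨p, rfl⟩ := Q.mkQ_surjective q
      rw [← map_smul]
      have : x ^ (m1 + m2) • p = 0 := by
        apply Subtype.ext
        apply Prod.ext
        · change x ^ (m1 + m2) • p.1.1 = 0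
          rw [pow_add, mul_comm, mul_smul, hm1, smul_zero]
        · change x ^ (m1 + m2) • p.1.2 = 0
          rw [pow_add, mul_smul, hm2, smul_zero]
      rw [this, map_zero]
    · rw [Ideal.span_singleton_le_iff_mem]
      refine ⟨r + k, ?_⟩
      rw [Module.mem_annihilator]
      intro q
      obtain ⟨p, rfl⟩ := Q.mkQ_surjective q
      rw [← map_smul]
      exact (Submodule.Quotient.mk_eq_zero Q).2 (hPQ p)
  · rw [pb_comp, hfin]

theorem cdLE_span_range [IsNoetherianRing R] (M : ModuleCat.{u} R) (s : ℕ) (a : Fin s → R) :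
    CdLE M (Ideal.span (Set.range a)) s := by
  induction s with
  | zero =>
    have : Ideal.span (Set.range a) = ⊥ := by simp
    rw [this]; exact cdLE_bot M
  | succ s ih =>
    have := (ih (fun i => a i.castSucc)).sup_span (a (Fin.last s))
    convert this using 1
    rw [← Ideal.span_union]
    congr 1
    ext x
    simp only [Set.mem_range, Fin.exists_fin_succ', Set.mem_union, Set.mem_singleton_iff, eq_comm]

end PartA


open CategoryTheory CategoryTheory.Abelian
section PartB
variable {R : Type u} [CommRing R]

/-- depth-like condition: `M` has depth exactly `n` along `m`. -/
def DepthIs (m : Ideal R) (n : ℕ) (M : Type u) [AddCommGroup M] [Module R M] : Prop :=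
  (∀ (N : Type u) [AddCommGroup N] [Module R N], m ≤ (Module.annihilator R N).radical →
    ∀ i < n, ∀ θ : Ext (ModuleCat.of R N) (ModuleCat.of R M) i, θ = 0) ∧
  ∃ η : Ext (ModuleCat.of R (R ⧸ m)) (ModuleCat.of R M) n, η ≠ 0

theorem depthIs_base (m : Ideal R) (hm : m ≠ ⊤) : DepthIs m 0 (R ⧸ m) := by
  refine ⟨fun _ _ _ _ i hi => absurd hi (by omega), Ext.mk₀ (𝟙 _), ?_⟩
  intro h
  have h2 : (𝟙 (ModuleCat.of R (R ⧸ m))) = 0 := (Ext.mk₀_eq_zero_iff _).1 h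
  have h3 : (1 : R ⧸ m) = 0 := by
    have := congrArg (fun f => f.hom (1 : R ⧸ m)) h2
    exact this
  rw [← map_one (Ideal.Quotient.mk m), Ideal.Quotient.eq_zero_iff_mem] at h3
  exact hm ((Ideal.eq_top_iff_one m).2 h3)

theorem ext_comp_smul_aux {N M : ModuleCat.{u} R} {i : ℕ} (θ : Ext N M i) (x : R) :
    θ.comp (Ext.mk₀ (x • 𝟙 M)) (add_zero i) = x • θ := by
  rw [Ext.smul_eq_comp_mk₀]

theorem ext_smul_nil {N : Type u} [AddCommGroup N] [Module R N] {M : ModuleCat.{u} R} {i : ℕ}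
    (θ : Ext (ModuleCat.of R N) M i) (x : R) (hx : ∀ n : N, x • n = 0) : x • θ = 0 := by
  have : x • (𝟙 (ModuleCat.of R N)) = 0 := by
    ext n; exact hx n
  have h2 : (Ext.mk₀ (x • 𝟙 (ModuleCat.of R N))).comp θ (zero_add i) = x • θ := by
    rw [Ext.mk₀_smul, Ext.smul_comp, Ext.mk₀_id_comp]
  rw [← h2, this]; simp

theorem DepthIs.step {m : Ideal R} {n : ℕ} {M M' : Type u} [AddCommGroup M] [Module R M]
    [AddCommGroup M'] [Module R M'] (h : DepthIs m n M') (x : R) (hxm : x ∈ m)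
    (π : M →ₗ[R] M') (hπ : Function.Surjective π)
    (hx : Function.Injective (LinearMap.lsmul R M x))
    (hex : Function.Exact (LinearMap.lsmul R M x) π) : DepthIs m (n + 1) M := by
  have hS := mkS_exact hex hx hπ
  have hmul : (ModuleCat.ofHom (LinearMap.lsmul R M x)) = x • 𝟙 (ModuleCat.of R M) := by
    ext y; rfl
  have G : (∀ (N : Type u) [AddCommGroup N] [Module R N], m ≤ (Module.annihilator R N).radical →
    ∀ i < n + 1, ∀ θ : Ext (ModuleCat.of R N) (ModuleCat.of R M) i, θ = 0) := by
    intro N _ _ hN i hi θ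
    obtain ⟨k, hk⟩ := hN hxm
    rw [Module.mem_annihilator] at hk
    have hinj : ∀ θ : Ext (ModuleCat.of R N) (ModuleCat.of R M) i, x • θ = 0 → θ = 0 := by
      intro θ hθ
      rcases i with _ | i
      · obtain ⟨f, rfl⟩ := (Ext.mk₀_bijective _ _).2 θ
        rw [← Ext.mk₀_smul, Ext.mk₀_eq_zero_iff] at hθ
        rw [Ext.mk₀_eq_zero_iff]
        ext y
        apply hx
        have := congrArg (fun g => g.hom y) hθ
        simpa using this
      · have h1 : θ.comp (Ext.mk₀ (ModuleCat.ofHom (LinearMap.lsmul R M x))) (add_zero _) = 0 := by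
          rw [hmul, ext_comp_smul_aux, hθ]
        obtain ⟨φ, hφ⟩ := Ext.covariant_sequence_exact₁ _ hS θ h1 (n₀ := i) (by omega)
        rw [← hφ, h.1 N hN i (by omega) φ, Ext.zero_comp]
    have : ∀ k : ℕ, x ^ k • θ = 0 → θ = 0 := by
      intro k
      induction k with
      | zero => simp
      | succ k ih =>
        intro h
        apply ih
        apply hinj
        rw [smul_smul, ← pow_succ', h]
    exact this k (ext_smul_nil θ _ hk)
  refine ⟨G, ?_⟩
  obtain ⟨η, hη⟩ := h.2
  have htor : m ≤ (Module.annihilator R (R ⧸ m)).radical := by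
    rw [Ideal.annihilator_quotient]; exact Ideal.le_radical
  refine ⟨η.comp hS.extClass rfl, fun h0 => hη ?_⟩
  obtain ⟨φ, hφ⟩ := Ext.covariant_sequence_exact₃ _ hS η rfl h0
  rw [← hφ, G _ htor n (by omega) φ, Ext.zero_comp]

theorem pb_sub {A B : Type u} [AddCommGroup A] [AddCommGroup B] [Module R A] [Module R B]
    {M : ModuleCat.{u} R} {i : ℕ} (f g : A →ₗ[R] B) (θ : Ext (ModuleCat.of R B) M i) :
    pb (f - g) θ = pb f θ - pb g θ := by
  have : ModuleCat.ofHom (f - g) = ModuleCat.ofHom f + -ModuleCat.ofHom g := by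
    ext x; simp [sub_eq_add_neg]
  rw [pb, this, Ext.mk₀_add, Ext.mk₀_neg, Ext.add_comp, Ext.neg_comp, sub_eq_add_neg]
  rfl

/-- first map in Mayer-Vietoris -/
def mvf (a b : Ideal R) : (R ⧸ (a ⊓ b)) →ₗ[R] (R ⧸ a) × (R ⧸ b) :=
  LinearMap.prod (Submodule.factor inf_le_left) (Submodule.factor inf_le_right)

/-- second map in Mayer-Vietoris -/
def mvg (a b : Ideal R) : ((R ⧸ a) × (R ⧸ b)) →ₗ[R] (R ⧸ (a ⊔ b)) :=
  (Submodule.factor le_sup_left) ∘ₗ LinearMap.fst R _ _ -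
    (Submodule.factor le_sup_right) ∘ₗ LinearMap.snd R _ _

theorem mv_exact (a b : Ideal R) : Function.Exact (mvf a b) (mvg a b) ∧
    Function.Injective (mvf a b) ∧ Function.Surjective (mvg a b) := by
  refine ⟨?_, ?_, ?_⟩
  · rintro ⟨x, y⟩
    obtain ⟨x, rfl⟩ := Submodule.mkQ_surjective _ x
    obtain ⟨y, rfl⟩ := Submodule.mkQ_surjective _ y
    constructor
    · intro h
      have h1 : (a ⊔ b).mkQ (x - y) = 0 := by rw [map_sub]; exact h
      have h2 : x - y ∈ a ⊔ b := (Submodule.Quotient.mk_eq_zero _).1 h1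
      obtain ⟨p, hp, q, hq, hpq⟩ := Submodule.mem_sup.1 h2
      refine ⟨(a ⊓ b).mkQ (x - p), ?_⟩
      apply Prod.ext
      · change a.mkQ (x - p) = a.mkQ x
        rw [map_sub, sub_eq_self]
        exact (Submodule.Quotient.mk_eq_zero _).2 hp
      · change b.mkQ (x - p) = b.mkQ y
        have : x - p = y + q := by linear_combination -hpq
        rw [this, map_add, add_eq_left]
        exact (Submodule.Quotient.mk_eq_zero _).2 hq
    · rintro ⟨z, hz⟩
      obtain ⟨z, rfl⟩ := Submodule.mkQ_surjective _ z
      rw [← hz]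
      change (a ⊔ b).mkQ z - (a ⊔ b).mkQ z = 0
      rw [sub_self]
  · rw [injective_iff_map_eq_zero]
    intro z hz
    obtain ⟨z, rfl⟩ := Submodule.mkQ_surjective _ z
    have h1 : a.mkQ z = 0 := congrArg Prod.fst hz
    have h2 : b.mkQ z = 0 := congrArg Prod.snd hz
    exact (Submodule.Quotient.mk_eq_zero _).2 ⟨(Submodule.Quotient.mk_eq_zero _).1 h1,
      (Submodule.Quotient.mk_eq_zero _).1 h2⟩
  · intro z
    obtain ⟨z, rfl⟩ := Submodule.mkQ_surjective _ z
    refine ⟨(a.mkQ z, 0), ?_⟩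
    change (a ⊔ b).mkQ z - (Submodule.factor le_sup_right) 0 = _
    rw [map_zero, sub_zero]

/-- Mayer-Vietoris lower bound. -/
theorem cd_lower [IsNoetherianRing R] {M : Type u} [AddCommGroup M] [Module R M] {m J1 J2 : Ideal R} {n s : ℕ}
    (hM : DepthIs m (n + 1) M) (hJ : J1 ⊔ J2 = m)
    (h1 : ∃ P, J1 ≤ P ∧ P ≤ m ∧ HasProjectiveDimensionLT (ModuleCat.of R (R ⧸ P)) (n + 1))
    (h2 : ∃ P, J2 ≤ P ∧ P ≤ m ∧ HasProjectiveDimensionLT (ModuleCat.of R (R ⧸ P)) (n + 1))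
    (hcd : CdLE (ModuleCat.of R M) (J1 ⊓ J2) s) : n ≤ s := by
  subst hJ
  obtain ⟨hG, η, hη⟩ := hM
  by_contra hlt
  apply hη
  have hdie : ∀ (J : Ideal R) (hJm : J ≤ J1 ⊔ J2), (∃ P, J ≤ P ∧ P ≤ J1 ⊔ J2 ∧
      HasProjectiveDimensionLT (ModuleCat.of R (R ⧸ P)) (n + 1)) →
      pb (Submodule.factor hJm) η = 0 := by
    rintro J hJm ⟨P, hP1, hP2, hP3⟩
    have : Submodule.factor hJm = Submodule.factor hP2 ∘ₗ Submodule.factor hP1 := by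
      ext; rfl
    rw [this, pb_comp]
    have h0 : pb (Submodule.factor hP2) η = 0 :=
      Ext.eq_zero_of_hasProjectiveDimensionLT _ (n + 1) le_rfl
    rw [h0, pb_zero]
  obtain ⟨hx, hi, hs⟩ := mv_exact J1 J2
  obtain ⟨φ, hφ⟩ := pb_package hx hi hs η (by
    rw [mvg, pb_sub, pb_comp, pb_comp, hdie _ _ h1, hdie _ _ h2, pb_zero, pb_zero, sub_zero])
  obtain ⟨N', _, _, _, π, hπ, hN', h0⟩ := hcd (R ⧸ (J1 ⊓ J2)) (by
    rw [Ideal.annihilator_quotient]; exact Ideal.le_radical) n (by omega) φ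
  obtain ⟨k, hk0, hk⟩ : ∃ k, 0 < k ∧ (J1 ⊓ J2) ^ k ≤ Module.annihilator R N' := by
    obtain ⟨k, hk⟩ := Ideal.exists_pow_le_of_le_radical_of_fg hN' (IsNoetherian.noetherian _)
    exact ⟨k + 1, by omega, (Ideal.pow_le_pow_right (by omega)).trans hk⟩
  obtain ⟨n', hn'⟩ := hπ ((J1 ⊓ J2).mkQ 1)
  obtain ⟨t, ht⟩ := Ideal.exists_pow_inf_eq_pow_smul J1 (J2 ^ k : Ideal R)
  have hAR : J1 ^ (t + k) ⊓ J2 ^ k ≤ (J1 ⊓ J2) ^ k := by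
    have := ht (t + k) (by omega)
    simp only [smul_eq_mul, Ideal.mul_top, Nat.add_sub_cancel_left] at this
    rw [this]
    calc J1 ^ k * (J1 ^ t ⊓ J2 ^ k) ≤ J1 ^ k * J2 ^ k := Ideal.mul_mono_right inf_le_right
      _ = (J1 * J2) ^ k := (mul_pow _ _ _).symm
      _ ≤ _ := Ideal.pow_right_mono Ideal.mul_le_inf k
  obtain ⟨a, ha⟩ : ∃ a, a = J1 ^ (t + k) := ⟨_, rfl⟩
  obtain ⟨b, hb⟩ : ∃ b, b = J2 ^ k := ⟨_, rfl⟩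
  have haJ : a ≤ J1 := ha ▸ Ideal.pow_le_self (by omega)
  have hbJ : b ≤ J2 := hb ▸ Ideal.pow_le_self (by omega)
  have hab : a ⊓ b ≤ Module.annihilator R N' := by rw [ha, hb]; exact hAR.trans hk
  let l : (R ⧸ (a ⊓ b)) →ₗ[R] N' := (a ⊓ b).liftQ (LinearMap.toSpanSingleton R N' n') (by
    intro x hx
    simpa using Module.mem_annihilator.1 (hab hx) n')
  have hfac : Submodule.factor (inf_le_inf haJ hbJ) = π ∘ₗ l := by
    ext
    change (J1 ⊓ J2).mkQ 1 = π ((1 : R) • n')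
    rw [one_smul, hn']
  obtain ⟨hx', hi', hs'⟩ := mv_exact a b
  have hfin := hφ _ _ _ (mvf a b) (mvg a b) hx' hi' hs' (Submodule.factor (inf_le_inf haJ hbJ))
    (LinearMap.prodMap (Submodule.factor haJ) (Submodule.factor hbJ))
    (Submodule.factor (sup_le_sup haJ hbJ)) (by ext <;> rfl) (by
      apply LinearMap.ext
      rintro ⟨x, y⟩
      obtain ⟨x, rfl⟩ := Submodule.mkQ_surjective _ x
      obtain ⟨y, rfl⟩ := Submodule.mkQ_surjective _ y
      rfl) (by rw [hfac, pb_comp, h0, pb_zero])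
  have hsurj : Function.Surjective (Submodule.factor (sup_le_sup haJ hbJ)) :=
    Submodule.factor_surjective _
  refine pb_inj (LinearMap.exact_subtype_ker_map _) (Submodule.subtype_injective _) hsurj ?_ η hfin
  intro ψ
  refine hG _ ?_ n (by omega) ψ
  refine le_trans ?_ (Ideal.radical_mono (LinearMap.annihilator_le_of_injective
    (LinearMap.ker (Submodule.factor (sup_le_sup haJ hbJ))).subtype (Submodule.subtype_injective _)))
  rw [Ideal.annihilator_quotient]
  apply sup_le
  · intro x hx
    exact ⟨t + k, Ideal.mem_sup_left (ha ▸ Ideal.pow_mem_pow hx _)⟩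
  · intro x hx
    exact ⟨k, Ideal.mem_sup_right (hb ▸ Ideal.pow_mem_pow hx _)⟩
end PartB


open CategoryTheory CategoryTheory.Abelian MvPolynomial
section PartC
variable {R : Type u} [CommRing R]

/-- `pd R/I < n` -/
abbrev PDLT (I : Ideal R) (n : ℕ) : Prop := HasProjectiveDimensionLT (ModuleCat.of R (R ⧸ I)) n

theorem pdlt_top : PDLT (⊤ : Ideal R) 0 := by
  rw [PDLT, hasProjectiveDimensionLT_zero_iff_isZero]
  have : Subsingleton (R ⧸ (⊤ : Ideal R)) := Ideal.Quotient.subsingleton_iff.2 rfl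
  exact ModuleCat.isZero_of_subsingleton (ModuleCat.of R (R ⧸ (⊤ : Ideal R)))

theorem PDLT.mono {I : Ideal R} {a b : ℕ} (h : PDLT I a) (hab : a ≤ b) : PDLT I b :=
  hasProjectiveDimensionLT_of_ge _ a b hab

theorem pdlt_bot : PDLT (⊥ : Ideal R) 1 := by
  have : Projective (ModuleCat.of R (R ⧸ (⊥ : Ideal R))) := by
    have e : R ≃ₗ[R] (R ⧸ (⊥ : Ideal R)) := (Submodule.quotEquivOfEqBot ⊥ rfl).symm
    exact ModuleCat.projective_of_free ((Module.Basis.singleton Unit R).map e)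
  exact (projective_iff_hasProjectiveDimensionLT_one).1 this

theorem pdlt_step {I Y : Ideal R} (hIY : I ≤ Y) {v : R} (hv : ∀ r, v * r ∈ I → r ∈ I) {n : ℕ}
    (hI : PDLT I n) (hY : PDLT Y (n + 1)) : PDLT (I ⊔ Ideal.span {v} * Y) (n + 1) := by
  have e1 := mkS_exact (LinearMap.exact_subtype_ker_map (Submodule.factor hIY))
    (Submodule.subtype_injective _) (Submodule.factor_surjective hIY)
  have hZ : HasProjectiveDimensionLT
      (ModuleCat.of R (LinearMap.ker (Submodule.factor hIY))) n :=
    e1.hasProjectiveDimensionLT_X₁ n hI hY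
  have hJ : I ≤ I ⊔ Ideal.span {v} * Y := le_sup_left
  let f : LinearMap.ker (Submodule.factor hIY) →ₗ[R] R ⧸ I :=
    v • (LinearMap.ker (Submodule.factor hIY)).subtype
  have hf : Function.Injective f := by
    rw [injective_iff_map_eq_zero]
    rintro ⟨z, hz⟩ h
    obtain ⟨z, rfl⟩ := Submodule.mkQ_surjective _ z
    apply Subtype.ext
    have h1 : I.mkQ (v * z) = 0 := h
    exact (Submodule.Quotient.mk_eq_zero _).2 (hv z ((Submodule.Quotient.mk_eq_zero _).1 h1))
  have hfe : Function.Exact f (Submodule.factor hJ) := by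
    intro z
    obtain ⟨z, rfl⟩ := Submodule.mkQ_surjective _ z
    constructor
    · intro h
      have h1 : (I ⊔ Ideal.span {v} * Y).mkQ z = 0 := h
      have h2 := (Submodule.Quotient.mk_eq_zero _).1 h1
      obtain ⟨p, hp, q, hq, rfl⟩ := Submodule.mem_sup.1 h2
      obtain ⟨y, hy, rfl⟩ := Ideal.mem_span_singleton_mul.1 hq
      refine ⟨⟨I.mkQ y, ?_⟩, ?_⟩
      · exact (Submodule.Quotient.mk_eq_zero Y).2 hy
      · change I.mkQ (v * y) = I.mkQ (p + v * y)
        rw [map_add, right_eq_add]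
        exact (Submodule.Quotient.mk_eq_zero _).2 hp
    · rintro ⟨⟨y, hy⟩, h⟩
      obtain ⟨y, rfl⟩ := Submodule.mkQ_surjective _ y
      rw [← h]
      have hyY : y ∈ Y := (Submodule.Quotient.mk_eq_zero Y).1 hy
      change (I ⊔ Ideal.span {v} * Y).mkQ (v * y) = 0
      exact (Submodule.Quotient.mk_eq_zero _).2 (Ideal.mem_sup_right
        (Ideal.mul_mem_mul (Ideal.mem_span_singleton_self v) hyY))
  have e2 := mkS_exact hfe hf (Submodule.factor_surjective hJ)
  exact e2.hasProjectiveDimensionLT_X₃ n hZ (hI.mono (by omega))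

theorem pdlt_step_top {I : Ideal R} {v : R} (hv : ∀ r, v * r ∈ I → r ∈ I) {n : ℕ}
    (hI : PDLT I n) : PDLT (I ⊔ Ideal.span {v}) (n + 1) := by
  have := pdlt_step le_top hv hI (pdlt_top.mono (Nat.zero_le _))
  rwa [Ideal.mul_top] at this

end PartC

section PartC2
variable {V : Type*} {K : Type*} [Field K]

theorem monI_reg {S : Set (V →₀ ℕ)} {v : V} (hS : ∀ s ∈ S, s v = 0) (r : MvPolynomial V K)
    (h : X v * r ∈ Ideal.span ((fun s => monomial s (1 : K)) '' S)) :
    r ∈ Ideal.span ((fun s => monomial s (1 : K)) '' S) := by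
  classical
  rw [mem_ideal_span_monomial_image] at h ⊢
  intro a ha
  obtain ⟨s, hs, hsa⟩ := h (Finsupp.single v 1 + a) (by
    rw [mem_support_iff, coeff_X_mul]
    exact mem_support_iff.1 ha)
  refine ⟨s, hs, fun w => ?_⟩
  by_cases hw : w = v
  · subst hw; rw [hS s hs]; exact Nat.zero_le _
  · have := hsa w
    simpa [Finsupp.single_apply, Ne.symm hw] using this

/-- ideal of variables -/
noncomputable def varI (K : Type*) [Field K] (U : Finset V) : Ideal (MvPolynomial V K) :=
  Ideal.span (X '' (U : Set V))

theorem varI_eq_mon (U : Finset V) : varI K U =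
    Ideal.span ((fun s => monomial s (1 : K)) '' ((fun i => Finsupp.single i 1) '' (U : Set V))) := by
  rw [varI, Set.image_image]; rfl

theorem varI_reg {U : Finset V} {v : V} (hv : v ∉ U) (r : MvPolynomial V K)
    (h : X v * r ∈ varI K U) : r ∈ varI K U := by
  classical
  rw [varI_eq_mon] at h ⊢
  refine monI_reg ?_ r h
  rintro _ ⟨i, hi, rfl⟩
  rw [Finsupp.single_apply, if_neg]
  rintro rfl; exact hv hi

theorem varI_insert [DecidableEq V] (v : V) (U : Finset V) : varI K (insert v U) = varI K U ⊔ Ideal.span {X v} := by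
  rw [varI, varI, Finset.coe_insert, Set.image_insert_eq, Ideal.span_insert, sup_comm]

theorem varI_empty : varI K (∅ : Finset V) = ⊥ := by simp [varI]

theorem varI_union [DecidableEq V] (U W : Finset V) : varI K (U ∪ W) = varI K U ⊔ varI K W := by
  rw [varI, varI, varI, Finset.coe_union, Set.image_union, Ideal.span_union]

theorem varI_mono {U W : Finset V} (h : U ⊆ W) : varI K U ≤ varI K W :=
  Ideal.span_mono (Set.image_mono (by exact_mod_cast h))

theorem X_mem_varI {U : Finset V} {v : V} (h : v ∈ U) : X v ∈ varI K U :=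
  Ideal.subset_span ⟨v, h, rfl⟩

theorem varI_ne_top (U : Finset V) : varI K U ≠ ⊤ := by
  intro h
  have h1 : (1 : MvPolynomial V K) ∈ varI K U := by rw [h]; trivial
  rw [varI_eq_mon, mem_ideal_span_monomial_image] at h1
  obtain ⟨s, ⟨i, hi, rfl⟩, hs⟩ := h1 0 (by simp)
  have := hs i
  simp at this

theorem pdlt_varI [DecidableEq V] (U : Finset V) : PDLT (varI K U) (U.card + 1) := by
  induction U using Finset.induction_on with
  | empty => rw [varI_empty]; exact pdlt_bot
  | insert v U hv ih =>
    rw [varI_insert, Finset.card_insert_of_notMem hv]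
    exact pdlt_step_top (varI_reg hv) ih

theorem depth_varI [DecidableEq V] [Fintype V] (k : ℕ) : ∀ U : Finset V, (Finset.univ \ U).card = k →
    DepthIs (varI K (Finset.univ : Finset V)) k (MvPolynomial V K ⧸ varI K U) := by
  induction k with
  | zero =>
    intro U hU
    have : U = Finset.univ := by
      rw [Finset.card_eq_zero, Finset.sdiff_eq_empty_iff_subset] at hU
      exact Finset.univ_subset_iff.1 hU
    subst this
    exact depthIs_base _ (varI_ne_top _)
  | succ k ih =>
    intro U hU
    obtain ⟨v, hv⟩ : (Finset.univ \ U).Nonempty := Finset.card_pos.1 (by omega)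
    have hvU : v ∉ U := (Finset.mem_sdiff.1 hv).2
    have h1 : (Finset.univ \ insert v U).card = k := by
      rw [Finset.sdiff_insert, Finset.card_erase_of_mem hv, hU]; rfl
    have hle : varI K U ≤ varI K (insert v U) := varI_mono (Finset.subset_insert _ _)
    refine (ih _ h1).step (X v) (X_mem_varI (Finset.mem_univ _)) (Submodule.factor hle)
      (Submodule.factor_surjective hle) ?_ ?_
    · rw [injective_iff_map_eq_zero]
      intro z hz
      obtain ⟨z, rfl⟩ := Submodule.mkQ_surjective _ z
      have h1 : (varI K U).mkQ (X v * z) = 0 := hz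
      exact (Submodule.Quotient.mk_eq_zero _).2
        (varI_reg hvU z ((Submodule.Quotient.mk_eq_zero _).1 h1))
    · intro z
      obtain ⟨z, rfl⟩ := Submodule.mkQ_surjective _ z
      constructor
      · intro h
        have h1 : (varI K (insert v U)).mkQ z = 0 := h
        have h2 := (Submodule.Quotient.mk_eq_zero _).1 h1
        rw [varI_insert] at h2
        obtain ⟨p, hp, q, hq, rfl⟩ := Submodule.mem_sup.1 h2
        obtain ⟨y, rfl⟩ := Ideal.mem_span_singleton'.1 hq
        refine ⟨(varI K U).mkQ y, ?_⟩
        change (varI K U).mkQ (X v * y) = (varI K U).mkQ (p + y * X v)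
        rw [map_add, mul_comm, right_eq_add]
        exact (Submodule.Quotient.mk_eq_zero _).2 hp
      · rintro ⟨y, h⟩
        obtain ⟨y, rfl⟩ := Submodule.mkQ_surjective _ y
        rw [← h]
        change (varI K (insert v U)).mkQ (X v * y) = 0
        exact (Submodule.Quotient.mk_eq_zero _).2
          (Ideal.mul_mem_right _ _ (X_mem_varI (Finset.mem_insert_self _ _)))

theorem cdLE_sup_varI [DecidableEq V] [Finite V] {M : ModuleCat (MvPolynomial V K)} {I : Ideal (MvPolynomial V K)}
    {s : ℕ} (h : CdLE M I s) (C : Finset V) : CdLE M (I ⊔ varI K C) (s + C.card) := by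
  induction C using Finset.induction_on with
  | empty => rw [varI_empty, sup_bot_eq]; exact h
  | insert v C hv ih =>
    rw [varI_insert, Finset.card_insert_of_notMem hv, ← sup_assoc, ← add_assoc]
    exact ih.sup_span _

theorem ara_lower [DecidableEq V] [Fintype V] (I : Ideal (MvPolynomial V K)) (A B C : Finset V)
    (hun : C ∪ A ∪ B = Finset.univ) (a b : V) (haA : a ∈ A) (haB : a ∉ B) (haC : a ∉ C)
    (hbB : b ∈ B) (hbA : b ∉ A) (hbC : b ∉ C)
    (hIP : ∀ v, I ≤ varI K (Finset.univ.erase v))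
    (hAB : ∀ x ∈ A, ∀ y ∈ B, X x * X y ∈ I)
    (s : ℕ) (g : Fin s → MvPolynomial V K) (hg : (Ideal.span (Set.range g)).radical = I.radical) :
    Fintype.card V ≤ s + C.card + 1 := by
  obtain ⟨n, hn⟩ : ∃ n, Fintype.card V = n + 1 :=
    ⟨Fintype.card V - 1, by have := Fintype.card_pos_iff.2 ⟨a⟩; omega⟩
  have hM : DepthIs (varI K (Finset.univ : Finset V)) (n + 1)
      (MvPolynomial V K ⧸ varI K (∅ : Finset V)) :=
    depth_varI (n + 1) ∅ (by rw [Finset.sdiff_empty, Finset.card_univ, hn])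
  have hcd := cdLE_sup_varI ((cdLE_span_range (ModuleCat.of _ (MvPolynomial V K ⧸ varI K (∅ : Finset V))) s g).congr hg) C
  have hpd : ∀ v : V, PDLT (varI K (Finset.univ.erase v)) (n + 1) := by
    intro v
    have := pdlt_varI (K := K) (Finset.univ.erase v)
    rwa [Finset.card_erase_of_mem (Finset.mem_univ _), Finset.card_univ, hn] at this
  have hC : ∀ v, v ∉ C → varI K C ≤ varI K (Finset.univ.erase v) := by
    intro v hv
    exact varI_mono fun x hx => Finset.mem_erase.2 ⟨fun h => hv (h ▸ hx), Finset.mem_univ _⟩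
  have hAe : varI K A ≤ varI K (Finset.univ.erase b) :=
    varI_mono fun x hx => Finset.mem_erase.2 ⟨fun h => hbA (h ▸ hx), Finset.mem_univ _⟩
  have hBe : varI K B ≤ varI K (Finset.univ.erase a) :=
    varI_mono fun x hx => Finset.mem_erase.2 ⟨fun h => haB (h ▸ hx), Finset.mem_univ _⟩
  have huv : ∀ v : V, varI K (Finset.univ.erase v) ≤ varI K (Finset.univ : Finset V) :=
    fun v => varI_mono (Finset.erase_subset _ _)
  have := cd_lower (J1 := I ⊔ varI K C ⊔ varI K B) (J2 := I ⊔ varI K C ⊔ varI K A) hM ?_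
    ⟨_, sup_le (sup_le (hIP a) (hC a haC)) hBe, huv a, hpd a⟩
    ⟨_, sup_le (sup_le (hIP b) (hC b hbC)) hAe, huv b, hpd b⟩ (hcd.congr ?_)
  · omega
  · apply le_antisymm
    · exact sup_le (sup_le (sup_le ((hIP a).trans (huv a)) (varI_mono (Finset.subset_univ _)))
        (varI_mono (Finset.subset_univ _))) (sup_le (sup_le ((hIP a).trans (huv a)) (varI_mono (Finset.subset_univ _)))
        (varI_mono (Finset.subset_univ _)))
    · rw [← hun, varI_union, varI_union]
      refine sup_le (sup_le ?_ ?_) ?_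
      · exact le_sup_of_le_left (le_sup_of_le_left le_sup_right)
      · exact le_sup_of_le_right le_sup_right
      · exact le_sup_of_le_left le_sup_right
  · apply le_antisymm
    · exact Ideal.radical_mono (le_inf le_sup_left le_sup_left)
    · rw [Ideal.radical_inf, ← Ideal.radical_mul]
      apply Ideal.radical_mono
      rw [Ideal.sup_mul]
      refine sup_le Ideal.mul_le_left ?_
      rw [Ideal.mul_sup]
      refine sup_le Ideal.mul_le_right ?_
      refine le_sup_of_le_left ?_
      rw [varI, varI, Ideal.span_mul_span', Ideal.span_le]
      rintro _ ⟨_, ⟨y, hy, rfl⟩, _, ⟨x, hx, rfl⟩, rfl⟩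
      change X y * X x ∈ I
      rw [mul_comm]
      exact hAB x hx y hy
end PartC2


open CategoryTheory CategoryTheory.Abelian MvPolynomial
set_option linter.unusedSectionVars false
section PartD
variable {V : Type*} [Fintype V] [DecidableEq V] {K : Type*} [Field K]

/-- number of elements of `T` before `t` -/
def kcnt (key : V → ℕ) (T : Finset V) (t : V) : ℕ := (T.filter (fun s => key s < key t)).card

/-- coefficient in the Koszul differential -/
noncomputable def kcf (K : Type*) [Field K] (key : V → ℕ) (T : Finset V) (t : V) : MvPolynomial V K :=
  C ((-1) ^ kcnt key T t) * X t

/-- Koszul differential -/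
noncomputable def kd (K : Type*) [Field K] (key : V → ℕ) {M : Type*} [AddCommGroup M] [Module (MvPolynomial V K) M]
    (f : Finset V → M) (T : Finset V) : M :=
  ∑ t ∈ Finset.univ.filter (fun t => t ∉ T), kcf K key T t • f (insert t T)

theorem kcnt_insert (key : V → ℕ) (T : Finset V) (s t : V) (hs : s ∉ T) :
    kcnt key (insert s T) t = kcnt key T t + if key s < key t then 1 else 0 := by
  unfold kcnt
  rw [Finset.filter_insert]
  split_ifs with h
  · rw [Finset.card_insert_of_notMem]
    simp [hs]
  · rfl

theorem kd_map (key : V → ℕ) {M N : Type*} [AddCommGroup M] [Module (MvPolynomial V K) M]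
    [AddCommGroup N] [Module (MvPolynomial V K) N] (φ : M →ₗ[MvPolynomial V K] N)
    (f : Finset V → M) (T : Finset V) : kd K key (fun T => φ (f T)) T = φ (kd K key f T) := by
  simp [kd, map_sum]

theorem kd_sub (key : V → ℕ) {M : Type*} [AddCommGroup M] [Module (MvPolynomial V K) M]
    (f g : Finset V → M) (T : Finset V) :
    kd K key (fun T => f T - g T) T = kd K key f T - kd K key g T := by
  simp [kd, smul_sub, Finset.sum_sub_distrib]

theorem kd_kd (key : V → ℕ) (hkey : Function.Injective key) {M : Type*} [AddCommGroup M]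
    [Module (MvPolynomial V K) M] (f : Finset V → M) (T : Finset V) :
    kd K key (kd K key f) T = 0 := by
  unfold kd
  simp only [Finset.smul_sum]
  rw [Finset.sum_sigma']
  refine Finset.sum_involution (fun p _ => ⟨p.2, p.1⟩) ?_ ?_ ?_ ?_
  · rintro ⟨s, t⟩ h
    simp only [Finset.mem_sigma, Finset.mem_filter, Finset.mem_univ, true_and,
      Finset.mem_insert, not_or] at h
    obtain ⟨hs, hts, ht⟩ := h
    dsimp only
    rw [Finset.insert_comm t s T, smul_smul, smul_smul, ← add_smul]
    have : kcf K key T s * kcf K key (insert s T) t + kcf K key T t * kcf K key (insert t T) s = 0 := by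
      unfold kcf
      rw [kcnt_insert _ _ _ _ hs, kcnt_insert _ _ _ _ ht]
      have hne : key t ≠ key s := fun h => hts (hkey h)
      rcases lt_or_gt_of_ne hne with h | h
      · rw [if_neg (by omega), if_pos h]
        simp only [map_pow, map_neg, map_one]
        ring
      · rw [if_neg (c := key t < key s) (by omega), if_pos h]
        simp only [map_pow, map_neg, map_one]
        ring
    rw [this, zero_smul]
  · rintro ⟨s, t⟩ h _ h2
    simp only [Finset.mem_sigma, Finset.mem_filter, Finset.mem_univ, true_and,
      Finset.mem_insert, not_or] at h
    have := congrArg Sigma.fst h2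
    exact h.2.1 this
  · rintro ⟨s, t⟩ h
    simp only [Finset.mem_sigma, Finset.mem_filter, Finset.mem_univ, true_and,
      Finset.mem_insert, not_or] at h ⊢
    exact ⟨h.2.2, fun h' => h.2.1 h'.symm, h.1⟩
  · rintro ⟨s, t⟩ h
    rfl

theorem exists_filter_poly (p : MvPolynomial V K) (P : (V →₀ ℕ) → Prop) [DecidablePred P] :
    ∃ q : MvPolynomial V K, ∀ b, coeff b q = if P b then coeff b p else 0 := by
  refine ⟨∑ a ∈ p.support.filter P, monomial a (coeff a p), fun b => ?_⟩
  rw [coeff_sum]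
  simp only [coeff_monomial]
  rw [Finset.sum_ite_eq' (p.support.filter P) b]
  by_cases hb : P b
  · by_cases h : b ∈ p.support
    · simp [hb, h]
    · rw [notMem_support_iff] at h
      simp [h]
  · simp [hb]

/-- minimal element of the support in a multidegree -/
def kmin (key : V → ℕ) (b : V →₀ ℕ) (T : Finset V) (v : V) : Prop :=
  (b v ≠ 0 ∨ v ∈ T) ∧ ∀ w, (b w ≠ 0 ∨ w ∈ T) → key v ≤ key w

theorem coeff_kd (key : V → ℕ) (f : Finset V → MvPolynomial V K) (T : Finset V) (b : V →₀ ℕ) :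
    coeff b (kd K key f T) = ∑ t ∈ Finset.univ.filter (fun t => t ∉ T ∧ b t ≠ 0),
      (-1) ^ kcnt key T t * coeff (b - Finsupp.single t 1) (f (insert t T)) := by
  unfold kd
  rw [coeff_sum, ← Finset.filter_filter, Finset.sum_filter (p := fun t => b t ≠ 0)]
  apply Finset.sum_congr rfl
  intro t _
  rw [smul_eq_mul, kcf, mul_assoc, coeff_C_mul, coeff_X_mul']
  simp only [Finsupp.mem_support_iff]
  split_ifs <;> simp

theorem koszul_exact (key : V → ℕ) (hkey : Function.Injective key)
    (f : Finset V → MvPolynomial V K) (hf : ∀ T, kd K key f T = 0) (h0 : coeff 0 (f ∅) = 0) :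
    ∃ g : Finset V → MvPolynomial V K, ∀ T, f T = kd K key g T := by
  classical
  have hq : ∀ (T : Finset V) (v : V), ∃ q : MvPolynomial V K, ∀ b, coeff b q =
      if kmin key b T v then coeff (Finsupp.single v 1 + b) (f (T.erase v)) else 0 := by
    intro T v
    obtain ⟨q, hq⟩ := exists_filter_poly (divMonomial (f (T.erase v)) (Finsupp.single v 1))
      (fun b => kmin key b T v)
    refine ⟨q, fun b => ?_⟩
    rw [hq, coeff_divMonomial]
  choose q hq using hq
  let g : Finset V → MvPolynomial V K := fun T => ∑ v ∈ T, q T v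
  have hg : ∀ T b v, kmin key b T v → coeff b (g T) =
      if v ∈ T then coeff (Finsupp.single v 1 + b) (f (T.erase v)) else 0 := by
    intro T b v hv
    simp only [g, coeff_sum, hq]
    have huniq : ∀ w, kmin key b T w → w = v := fun w hw =>
      hkey (le_antisymm (hw.2 v hv.1) (hv.2 w hw.1))
    split_ifs with h
    · rw [Finset.sum_eq_single v]
      · rw [if_pos hv]
      · intro w _ hw
        rw [if_neg (fun h => hw (huniq w h))]
      · exact fun h' => absurd h h'
    · apply Finset.sum_eq_zero
      intro w hw
      rw [if_neg (fun h' => h (huniq w h' ▸ hw))]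
  refine ⟨g, fun T => ?_⟩
  ext b
  by_cases hc : ∃ v, b v ≠ 0 ∨ v ∈ T
  swap
  · have hb : b = 0 := by
      ext v; by_contra h; exact hc ⟨v, Or.inl h⟩
    have hT : T = ∅ := by
      rw [Finset.eq_empty_iff_forall_notMem]; exact fun v h => hc ⟨v, Or.inr h⟩
    subst hb hT
    rw [h0, coeff_kd]
    simp
  obtain ⟨v, hv⟩ : ∃ v, kmin key b T v := by
    obtain ⟨v, hv⟩ := hc
    obtain ⟨m, hm, hmin⟩ := Finset.exists_min_image
      (Finset.univ.filter (fun v => b v ≠ 0 ∨ v ∈ T)) key ⟨v, by simpa using hv⟩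
    refine ⟨m, by simpa using hm, fun w hw => hmin w (by simpa using hw)⟩
  have hmin : ∀ t, t ∉ T → b t ≠ 0 → kmin key (b - Finsupp.single t 1) (insert t T) v := by
    intro t ht hbt
    have : ∀ w, ((b - Finsupp.single t 1 : V →₀ ℕ) w ≠ 0 ∨ w ∈ insert t T) ↔ (b w ≠ 0 ∨ w ∈ T) := by
      intro w
      by_cases hw : w = t
      · subst hw; simp [hbt]
      · simp [hw, Finsupp.single_apply, Ne.symm hw]
    refine ⟨(this v).2 hv.1, fun w hw => hv.2 w ((this w).1 hw)⟩
  rw [coeff_kd]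
  by_cases hvT : v ∈ T
  · -- use the cycle condition
    have hcyc := congrArg (coeff (Finsupp.single v 1 + b)) (hf (T.erase v))
    rw [coeff_kd, coeff_zero] at hcyc
    have hset : Finset.univ.filter (fun t => t ∉ T.erase v ∧ (Finsupp.single v 1 + b : V →₀ ℕ) t ≠ 0) =
        insert v (Finset.univ.filter (fun t => t ∉ T ∧ b t ≠ 0)) := by
      ext t
      by_cases ht : t = v
      · subst ht; simp
      · simp [ht, Finsupp.single_apply, Ne.symm ht]
    rw [hset, Finset.sum_insert (by simp [hvT])] at hcyc
    have hk0 : kcnt key (T.erase v) v = 0 := by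
      unfold kcnt
      rw [Finset.card_eq_zero, Finset.filter_eq_empty_iff]
      intro w hw
      have := hv.2 w (Or.inr (Finset.mem_of_mem_erase hw))
      omega
    rw [hk0, Finset.insert_erase hvT, pow_zero, one_mul, add_tsub_cancel_left] at hcyc
    rw [eq_neg_of_add_eq_zero_left hcyc, ← Finset.sum_neg_distrib]
    apply Finset.sum_congr rfl
    intro t ht
    simp only [Finset.mem_filter, Finset.mem_univ, true_and] at ht
    have htv : t ≠ v := fun h => ht.1 (h ▸ hvT)
    rw [hg _ _ v (hmin t ht.1 ht.2), if_pos (Finset.mem_insert_of_mem hvT)]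
    have h1 : kcnt key T t = kcnt key (T.erase v) t + 1 := by
      conv_lhs => rw [← Finset.insert_erase hvT]
      rw [kcnt_insert _ _ _ _ (Finset.notMem_erase v T), if_pos]
      have := hv.2 t (Or.inl ht.2)
      have hne : key v ≠ key t := fun h => htv (hkey h).symm
      omega
    have h2 : (insert t T).erase v = insert t (T.erase v) := by
      rw [Finset.erase_insert_of_ne htv]
    have h3 : Finsupp.single v 1 + (b - Finsupp.single t 1) = Finsupp.single v 1 + b - Finsupp.single t 1 := by
      rw [add_tsub_assoc_of_le]
      simpa [Finsupp.single_le_iff] using Nat.one_le_iff_ne_zero.2 ht.2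
    rw [h1, h2, h3, pow_succ]
    ring
  · have hbv : b v ≠ 0 := hv.1.resolve_right hvT
    rw [Finset.sum_eq_single v]
    · rw [hg _ _ v (hmin v hvT hbv), if_pos (Finset.mem_insert_self _ _), Finset.erase_insert hvT]
      have hk0 : kcnt key T v = 0 := by
        unfold kcnt
        rw [Finset.card_eq_zero, Finset.filter_eq_empty_iff]
        intro w hw
        have := hv.2 w (Or.inr hw)
        omega
      rw [hk0, pow_zero, one_mul, add_tsub_cancel_of_le]
      simpa [Finsupp.single_le_iff] using Nat.one_le_iff_ne_zero.2 hbv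
    · intro t ht htv
      simp only [Finset.mem_filter, Finset.mem_univ, true_and] at ht
      rw [hg _ _ v (hmin t ht.1 ht.2), if_neg, mul_zero]
      simp [hvT, Ne.symm htv]
    · intro h
      simp [hvT, hbv] at h

theorem koszul_exact_free (key : V → ℕ) (hkey : Function.Injective key) {ι : Type*}
    (f : Finset V → (ι →₀ MvPolynomial V K)) (hf : ∀ T, kd K key f T = 0)
    (h0 : ∀ j, coeff 0 (f ∅ j) = 0) :
    ∃ g : Finset V → (ι →₀ MvPolynomial V K), ∀ T, f T = kd K key g T := by
  classical
  have h : ∀ j : ι, ∃ g : Finset V → MvPolynomial V K, ∀ T, f T j = kd K key g T := by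
    intro j
    refine koszul_exact key hkey (fun T => f T j) (fun T => ?_) (h0 j)
    have := kd_map key (Finsupp.lapply (R := MvPolynomial V K) j) f T
    rw [hf, map_zero] at this
    exact this
  choose g hg using h
  let S : Finset ι := Finset.univ.biUnion (fun T : Finset V => (f T).support)
  have hS : ∀ j, j ∉ S → ∀ T, f T j = 0 := by
    intro j hj T
    by_contra hne
    exact hj (Finset.mem_biUnion.2 ⟨T, Finset.mem_univ _, Finsupp.mem_support_iff.2 hne⟩)
  refine ⟨fun T => ∑ j ∈ S, Finsupp.single j (g j T), fun T => ?_⟩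
  ext1 j
  have h2 := kd_map key (Finsupp.lapply (R := MvPolynomial V K) j)
    (fun T => ∑ j ∈ S, Finsupp.single j (g j T)) T
  have h3 : (fun T => Finsupp.lapply (R := MvPolynomial V K) j (∑ j ∈ S, Finsupp.single j (g j T))) =
    fun T => if j ∈ S then g j T else 0 := by
    funext T
    simp [Finsupp.lapply_apply, Finsupp.single_apply]
  rw [h3] at h2
  change _ = (Finsupp.lapply (R := MvPolynomial V K) j) _
  rw [← h2]
  by_cases hj : j ∈ S
  · simp only [hj, if_true]
    exact hg j T
  · simp only [hj, if_false, hS j hj T]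
    simp [kd]

/-- changing the value at the empty set does not matter -/
theorem kd_update_empty (key : V → ℕ) {M : Type*} [AddCommGroup M] [Module (MvPolynomial V K) M]
    (f : Finset V → M) (T : Finset V) (m : M) :
    kd K key (Function.update f ∅ m) T = kd K key f T := by
  unfold kd
  apply Finset.sum_congr rfl
  intro t _
  rw [Function.update_of_ne (Finset.insert_ne_empty t T)]

end PartD


open CategoryTheory CategoryTheory.Abelian MvPolynomial
set_option linter.unusedSectionVars false
universe u1 u2
section PartE
variable {V : Type u1} [Fintype V] [DecidableEq V] {K : Type u2} [Field K]

theorem koszul_pd_base (key : V → ℕ) (hkey : Function.Injective key) {M : Type*} [AddCommGroup M]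
    [Module (MvPolynomial V K) M] [hM : Module.Projective (MvPolynomial V K) M]
    (z : Finset V → M) (h0 : z ∅ = 0) (hz : ∀ T, kd K key z T = 0) :
    ∃ w : Finset V → M, ∀ T, z T = kd K key w T := by
  obtain ⟨s, hs⟩ := Module.projective_def'.1 hM
  obtain ⟨g, hg⟩ := koszul_exact_free key hkey (fun T => s (z T))
    (fun T => by rw [kd_map, hz, map_zero]) (fun j => by simp [h0])
  refine ⟨fun T => Finsupp.linearCombination _ id (g T), fun T => ?_⟩
  rw [kd_map, ← hg]
  exact (LinearMap.congr_fun hs (z T)).symm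

theorem koszul_pd (key : V → ℕ) (hkey : Function.Injective key) (m : ℕ) :
    ∀ (M : Type (max u1 u2)) [AddCommGroup M] [Module (MvPolynomial V K) M],
    HasProjectiveDimensionLT (ModuleCat.of (MvPolynomial V K) M) (m + 1) →
    ∀ (n : ℕ) (_ : m < n) (z : Finset V → M) (_ : ∀ T, T.card ≠ n → z T = 0)
    (_ : ∀ T, kd K key z T = 0), ∃ w : Finset V → M, ∀ T, z T = kd K key w T := by
  induction m with
  | zero =>
    intro M _ _ hM n hn z hz hc
    have : Projective (ModuleCat.of (MvPolynomial V K) M) :=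
      projective_iff_hasProjectiveDimensionLT_one.2 hM
    have : Module.Projective (MvPolynomial V K) M := by
      exact (IsProjective.iff_projective (R := MvPolynomial V K) M).2 this
    exact koszul_pd_base key hkey z (hz _ (by simp; omega)) hc
  | succ m ih =>
    intro M _ _ hM n hn z hz hc
    let π : (M →₀ MvPolynomial V K) →ₗ[MvPolynomial V K] M := Finsupp.linearCombination _ id
    have hπ : Function.Surjective π := Finsupp.linearCombination_id_surjective _ _
    have e1 := mkS_exact (LinearMap.exact_subtype_ker_map π)
      (Submodule.subtype_injective _) hπ
    have hF : Projective (ModuleCat.of (MvPolynomial V K) (M →₀ MvPolynomial V K)) :=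
      ModuleCat.projective_of_free (Finsupp.basisSingleOne)
    have hF1 : HasProjectiveDimensionLT
        (ModuleCat.of (MvPolynomial V K) (M →₀ MvPolynomial V K)) 1 :=
      projective_iff_hasProjectiveDimensionLT_one.1 hF
    have hQ : HasProjectiveDimensionLT (ModuleCat.of (MvPolynomial V K) (LinearMap.ker π)) (m + 1) :=
      e1.hasProjectiveDimensionLT_X₁ (m + 1) (hasProjectiveDimensionLT_of_ge _ 1 _ (by omega)) hM
    have hl : ∀ T, ∃ y, π y = z T ∧ (z T = 0 → y = 0) := by
      intro T
      by_cases h : z T = 0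
      · exact ⟨0, by simp [h], fun _ => rfl⟩
      · obtain ⟨y, hy⟩ := hπ (z T)
        exact ⟨y, hy, fun h' => absurd h' h⟩
    choose y hy hy0 using hl
    have hyk : ∀ T, kd K key y T ∈ LinearMap.ker π := by
      intro T
      rw [LinearMap.mem_ker, ← kd_map]
      simp only [hy]
      exact hc T
    let q : Finset V → LinearMap.ker π := fun T => ⟨kd K key y T, hyk T⟩
    have hq : ∀ T, ((q T : LinearMap.ker π) : M →₀ MvPolynomial V K) = kd K key y T := fun T => rfl
    obtain ⟨w, hw⟩ := ih (LinearMap.ker π) hQ (n - 1) (by omega) q (by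
      intro T hT
      apply Subtype.ext
      rw [hq, kd]
      apply Finset.sum_eq_zero
      intro t ht
      rw [hy0 _ (hz _ ?_), smul_zero]
      rw [Finset.card_insert_of_notMem (by simpa using ht)]
      omega) (by
      intro T
      apply (LinearMap.ker π).subtype_injective
      rw [map_zero]
      refine (kd_map key (LinearMap.ker π).subtype q T).symm.trans ?_
      exact kd_kd key hkey y T)
    let w' : Finset V → (M →₀ MvPolynomial V K) :=
      Function.update (fun T => (w T : M →₀ MvPolynomial V K)) ∅ 0
    have hw'k : ∀ T, π (w' T) = 0 := by
      intro T
      by_cases hT : T = ∅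
      · subst hT; simp [w']
      · simp only [w', Function.update_of_ne hT]
        exact (w T).2
    obtain ⟨u, hu⟩ := koszul_exact_free key hkey (fun T => y T - w' T) (by
      intro T
      rw [kd_sub, kd_update_empty, ← hq, hw T, sub_eq_zero]
      exact (kd_map key (LinearMap.ker π).subtype w T).symm) (by
      intro j
      simp [w', hy0 ∅ (hz ∅ (by simp; omega))])
    refine ⟨fun T => π (u T), fun T => ?_⟩
    rw [kd_map, ← hu, map_sub, hw'k, sub_zero, hy]

/-- Koszul differential restricted to variables in `P` -/
noncomputable def kdS (K : Type*) [Field K] (P : Finset V) (key : V → ℕ) {M : Type*}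
    [AddCommGroup M] [Module (MvPolynomial V K) M]
    (f : Finset V → M) (T : Finset V) : M :=
  ∑ t ∈ P.filter (fun t => t ∉ T), kcf K key T t • f (insert t T)

theorem kdS_kdS (P : Finset V) (key : V → ℕ) (hkey : Function.Injective key) {M : Type*} [AddCommGroup M]
    [Module (MvPolynomial V K) M] (f : Finset V → M) (T : Finset V) :
    kdS K P key (kdS K P key f) T = 0 := by
  unfold kdS
  simp only [Finset.smul_sum]
  rw [Finset.sum_sigma']
  refine Finset.sum_involution (fun p _ => ⟨p.2, p.1⟩) ?_ ?_ ?_ ?_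
  · rintro ⟨s, t⟩ h
    simp only [Finset.mem_sigma, Finset.mem_filter,
      Finset.mem_insert, not_or] at h
    obtain ⟨⟨_, hs⟩, _, hts, ht⟩ := h
    dsimp only
    rw [Finset.insert_comm t s T, smul_smul, smul_smul, ← add_smul]
    have : kcf K key T s * kcf K key (insert s T) t + kcf K key T t * kcf K key (insert t T) s = 0 := by
      unfold kcf
      rw [kcnt_insert _ _ _ _ hs, kcnt_insert _ _ _ _ ht]
      have hne : key t ≠ key s := fun h => hts (hkey h)
      rcases lt_or_gt_of_ne hne with h | h
      · rw [if_neg (by omega), if_pos h]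
        simp only [map_pow, map_neg, map_one]
        ring
      · rw [if_neg (c := key t < key s) (by omega), if_pos h]
        simp only [map_pow, map_neg, map_one]
        ring
    rw [this, zero_smul]
  · rintro ⟨s, t⟩ h _ h2
    simp only [Finset.mem_sigma, Finset.mem_filter,
      Finset.mem_insert, not_or] at h
    have := congrArg Sigma.fst h2
    exact h.2.2.1 this
  · rintro ⟨s, t⟩ h
    simp only [Finset.mem_sigma, Finset.mem_filter,
      Finset.mem_insert, not_or] at h ⊢
    exact ⟨⟨h.2.1, h.2.2.2⟩, h.1.1, fun h' => h.2.2.1 h'.symm, h.1.2⟩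
  · rintro ⟨s, t⟩ h
    rfl

theorem pd_lower (I : Ideal (MvPolynomial V K)) (A B : Finset V) (hd : Disjoint A B)
    (a b : V) (ha : a ∈ A) (hb : b ∈ B)
    (hI : ∀ p ∈ I, ∀ v, coeff (Finsupp.single v 1) p = 0)
    (hAB : ∀ x ∈ A, ∀ y ∈ B, X x * X y ∈ I) (m : ℕ) (hpd : PDLT I (m + 1)) :
    A.card + B.card ≤ m + 1 := by
  classical
  by_contra hlt
  obtain ⟨key, hkey⟩ : ∃ key : V → ℕ, Function.Injective key :=
    ⟨fun v => (Fintype.equivFin V v : ℕ), fun x y h => (Fintype.equivFin V).injective (Fin.ext h)⟩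
  let e : Finset V → MvPolynomial V K := fun S => if S = A ∪ B then 1 else 0
  have he : ∀ S, S ≠ A ∪ B → e S = 0 := fun S h => if_neg h
  let z : Finset V → MvPolynomial V K := kdS K A key e
  have hcard : (A ∪ B).card = A.card + B.card := Finset.card_union_of_disjoint hd
  have hz0 : ∀ T, T.card ≠ A.card + B.card - 1 → z T = 0 := by
    intro T hT
    apply Finset.sum_eq_zero
    intro t ht
    rw [he, smul_zero]
    intro h
    have := congrArg Finset.card h
    rw [Finset.card_insert_of_notMem (Finset.mem_filter.1 ht).2, hcard] at this
    omega
  have hzsub : ∀ T t, t ∉ A → t ∉ B → t ∈ T → z T = 0 := by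
    intro T t h1 h2 h3
    apply Finset.sum_eq_zero
    intro s hs
    rw [he, smul_zero]
    intro h
    have : t ∈ A ∪ B := h ▸ Finset.mem_insert_of_mem h3
    simp [h1, h2] at this
  have hcyc : ∀ T, kd K key z T ∈ I := by
    intro T
    have hAA := kdS_kdS (K := K) A key hkey e T
    change kdS K A key z T = 0 at hAA
    have hsub : kd K key z T = kdS K A key z T + kdS K (Finset.univ \ A) key z T := by
      unfold kd kdS
      rw [← Finset.sum_union]
      · rw [← Finset.filter_union]
        congr 1
        ext t; simp
      · exact Finset.disjoint_filter_filter Finset.disjoint_sdiff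
    rw [hsub, hAA, zero_add]
    apply Ideal.sum_mem
    intro s hs
    have hs' := Finset.mem_filter.1 hs
    have hsA : s ∉ A := by simpa using hs'.1
    by_cases hsB : s ∈ B
    · rw [smul_eq_mul]
      simp only [z, kdS]
      rw [Finset.mul_sum]
      apply Ideal.sum_mem
      intro t ht
      have htA := (Finset.mem_filter.1 ht).1
      have : kcf K key T s * kcf K key (insert s T) t • e (insert t (insert s T)) =
        (C ((-1) ^ kcnt key T s) * C ((-1) ^ kcnt key (insert s T) t) * e (insert t (insert s T))) * (X t * X s) := by
        unfold kcf; rw [smul_eq_mul]; ring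
      rw [this]
      exact I.mul_mem_left _ (hAB t htA s hsB)
    · rw [hzsub _ s hsA hsB (Finset.mem_insert_self _ _), smul_zero]
      exact I.zero_mem
  obtain ⟨w, hw⟩ := koszul_pd key hkey m _ hpd (A.card + B.card - 1) (by omega)
    (fun T => I.mkQ (z T)) (fun T hT => by rw [hz0 T hT, map_zero]) (fun T => by
      rw [kd_map]
      exact (Submodule.Quotient.mk_eq_zero _).2 (hcyc T))
  have hlift : ∀ T, ∃ y, I.mkQ y = w T := fun T => Submodule.mkQ_surjective _ (w T)
  choose y hy using hlift
  have hmem : ∀ T, z T - kd K key y T ∈ I := by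
    intro T
    refine (Submodule.Quotient.mk_eq_zero _).1 ?_
    change I.mkQ _ = 0
    rw [map_sub, hw, ← kd_map]
    simp only [hy, sub_self]
  have hcoef : ∀ v, v ∈ A ∪ B → coeff (Finsupp.single v 1) (z ((A ∪ B).erase v)) =
      (-1) ^ kcnt key ((A ∪ B).erase v) v * coeff 0 (y (A ∪ B)) := by
    intro v hv
    have h1 := hI _ (hmem ((A ∪ B).erase v)) v
    rw [coeff_sub, sub_eq_zero] at h1
    rw [h1, coeff_kd, Finset.sum_eq_single v]
    · rw [Finset.insert_erase hv, tsub_self]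
    · intro t ht htv
      simp [Finsupp.single_apply, Ne.symm htv] at ht
    · intro h; simp at h
  have hz_b : z ((A ∪ B).erase b) = 0 := by
    apply Finset.sum_eq_zero
    intro t ht
    obtain ⟨h1, h2⟩ := Finset.mem_filter.1 ht
    exfalso; apply h2
    refine Finset.mem_erase.2 ⟨?_, Finset.mem_union_left _ h1⟩
    rintro rfl
    exact Finset.disjoint_left.1 hd h1 hb
  have haW : a ∈ A ∪ B := Finset.mem_union_left _ ha
  have hz_a : z ((A ∪ B).erase a) = kcf K key ((A ∪ B).erase a) a := by
    simp only [z, kdS]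
    rw [Finset.sum_eq_single a]
    · rw [Finset.insert_erase haW]; simp [e]
    · intro t ht hta
      exfalso
      obtain ⟨h1, h2⟩ := Finset.mem_filter.1 ht
      exact h2 (Finset.mem_erase.2 ⟨hta, Finset.mem_union_left _ h1⟩)
    · intro h; exfalso; exact h (by simp [ha])
  have h1 := hcoef a haW
  have h2 := hcoef b (Finset.mem_union_right _ hb)
  rw [hz_b, coeff_zero] at h2
  have h3 : coeff 0 (y (A ∪ B)) = 0 := by
    rcases mul_eq_zero.1 h2.symm with h | h
    · exact absurd h (pow_ne_zero _ (by simp))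
    · exact h
  rw [h3, hz_a, mul_zero, kcf, coeff_C_mul, coeff_X] at h1
  rw [if_pos rfl, mul_one] at h1
  exact pow_ne_zero _ (by simp) h1
end PartE


open CategoryTheory CategoryTheory.Abelian MvPolynomial
set_option linter.unusedSectionVars false
section PartF
variable {V : Type*} [Fintype V] [DecidableEq V] {K : Type*} [Field K]

theorem hc_mul (D e : ℕ) (p q : MvPolynomial V K) (hq : q.IsHomogeneous e) :
    homogeneousComponent (D + e) (p * q) = homogeneousComponent D p * q := by
  have h1 : p * q = ∑ i ∈ Finset.range (p.totalDegree + 1), homogeneousComponent i p * q := by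
    rw [← Finset.sum_mul, sum_homogeneousComponent]
  rw [h1, map_sum]
  have h2 : ∀ i, homogeneousComponent (D + e) (homogeneousComponent i p * q) =
      if D = i then homogeneousComponent i p * q else 0 := by
    intro i
    rw [homogeneousComponent_of_mem ((homogeneousComponent_isHomogeneous i p).mul hq)]
    simp
  simp only [h2]
  rw [Finset.sum_ite_eq]
  split_ifs with h
  · rfl
  · rw [homogeneousComponent_eq_zero, zero_mul]
    simp at h; omega

/-- homogeneous component on a free module -/
noncomputable def hcF {ι : Type*} (D : ℕ) (y : ι →₀ MvPolynomial V K) : ι →₀ MvPolynomial V K :=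
  Finsupp.mapRange (homogeneousComponent D) (map_zero _) y

theorem hcF_comm {ι κ : Type*} (δ : (κ →₀ MvPolynomial V K) →ₗ[MvPolynomial V K] (ι →₀ MvPolynomial V K))
    (e D : ℕ) (hδ : ∀ b c, (δ (Finsupp.single b 1) c).IsHomogeneous e) (y : κ →₀ MvPolynomial V K) :
    δ (hcF D y) = hcF (D + e) (δ y) := by
  induction y using Finsupp.induction_linear with
  | zero => simp [hcF]
  | add f g hf hg =>
    have h1 : hcF D (f + g) = hcF D f + hcF D g := Finsupp.mapRange_add (by simp) f g
    have h2 : hcF (D + e) (δ f + δ g) = hcF (D + e) (δ f) + hcF (D + e) (δ g) :=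
      Finsupp.mapRange_add (by simp) _ _
    rw [h1, map_add, map_add, h2, hf, hg]
  | single b p =>
    have h1 : ∀ p : MvPolynomial V K, δ (Finsupp.single b p) = p • δ (Finsupp.single b 1) := by
      intro p
      rw [← map_smul, Finsupp.smul_single, smul_eq_mul, mul_one]
    rw [hcF, Finsupp.mapRange_single, h1, h1 p]
    ext1 c
    simp only [hcF, Finsupp.mapRange_apply, Finsupp.smul_apply, smul_eq_mul]
    rw [hc_mul _ _ _ _ (hδ b c)]

theorem kd_homog (key : V → ℕ) {ι : Type*} (z : Finset V → (ι →₀ MvPolynomial V K)) (D : ℕ)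
    (hz : ∀ T c, (z T c).IsHomogeneous D) (T : Finset V) (c : ι) :
    (kd K key z T c).IsHomogeneous (D + 1) := by
  have := kd_map key (Finsupp.lapply (R := MvPolynomial V K) c) z T
  simp only [Finsupp.lapply_apply] at this
  rw [← this, kd]
  apply IsHomogeneous.sum
  intro t _
  rw [smul_eq_mul, kcf, mul_comm]
  exact (hz _ _).mul (isHomogeneous_C_mul_X _ _)

theorem hcF_of_homog {ι : Type*} (D : ℕ) (y : ι →₀ MvPolynomial V K)
    (hy : ∀ c, (y c).IsHomogeneous D) : hcF D y = y := by
  ext1 c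
  rw [hcF, Finsupp.mapRange_apply, homogeneousComponent_eq_self (hy c)]

theorem chase_step (key : V → ℕ) (hkey : Function.Injective key) {ι κ : Type*}
    (δ : (κ →₀ MvPolynomial V K) →ₗ[MvPolynomial V K] (ι →₀ MvPolynomial V K)) (e D n : ℕ)
    (hδ : ∀ b c, (δ (Finsupp.single b 1) c).IsHomogeneous (e + 1))
    (hIH : ∀ y : Finset V → (κ →₀ MvPolynomial V K), (∀ T, T.card ≠ n → y T = 0) →
      (∀ T c, (y T c).IsHomogeneous D) → (∀ T, δ (kd K key y T) = 0) →
      ∃ w, ∀ T, δ (y T - kd K key w T) = 0)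
    (z : Finset V → (ι →₀ MvPolynomial V K)) (hz0 : ∀ T, T.card ≠ n + 1 → z T = 0)
    (hzD : ∀ T c, (z T c).IsHomogeneous (D + e))
    (hz : ∀ T, kd K key z T ∈ LinearMap.range δ) :
    ∃ w, ∀ T, z T - kd K key w T ∈ LinearMap.range δ := by
  have hex : ∀ T, ∃ y, δ y = kd K key z T ∧ (∀ c, (y c).IsHomogeneous D) ∧ (T.card ≠ n → y = 0) := by
    intro T
    by_cases hT : T.card = n
    · obtain ⟨y, hy⟩ := hz T
      refine ⟨hcF D y, ?_, fun c => ?_, fun h => absurd hT h⟩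
      · rw [hcF_comm δ (e + 1) D hδ, hy]
        exact hcF_of_homog _ _ (fun c => kd_homog key z _ hzD T c)
      · rw [hcF, Finsupp.mapRange_apply]; exact homogeneousComponent_isHomogeneous _ _
    · refine ⟨0, ?_, fun c => isHomogeneous_zero _ _ _, fun _ => rfl⟩
      rw [map_zero, kd, Finset.sum_eq_zero]
      intro t ht
      rw [hz0, smul_zero]
      rw [Finset.card_insert_of_notMem (by simpa using ht)]
      omega
  choose y hy1 hy2 hy3 using hex
  obtain ⟨w', hw'⟩ := hIH y hy3 hy2 (fun T => by
    rw [← kd_map]; simp only [hy1]; exact kd_kd key hkey z T)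
  let w : Finset V → (κ →₀ MvPolynomial V K) := Function.update w' ∅ 0
  obtain ⟨u, hu⟩ := koszul_exact_free key hkey (fun T => z T - δ (w T)) (by
    intro T
    rw [kd_sub, kd_map, kd_update_empty, sub_eq_zero, ← hy1, ← sub_eq_zero, ← map_sub]
    exact hw' T) (by
    intro j
    rw [hz0 ∅ (by simp)]
    simp [w])
  refine ⟨u, fun T => ⟨w T, ?_⟩⟩
  rw [← hu]; abel

theorem chase (key : V → ℕ) (hkey : Function.Injective key) (ι : ℕ → Type)
    (d : ∀ i : ℕ, ((ι (i + 1) →₀ MvPolynomial V K) →ₗ[MvPolynomial V K]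
      (ι i →₀ MvPolynomial V K)))
    (hd : ∀ i : ℕ, LinearMap.ker (d i) = LinearMap.range (d (i + 1)))
    (hlin : ∀ (i : ℕ) (b : ι (i + 2)) (c : ι (i + 1)),
      ((d (i + 1)) (Finsupp.single b 1)) c ∈ homogeneousSubmodule V K 1) (n : ℕ) :
    ∀ (k D : ℕ) (_ : 0 < D) (z : Finset V → (ι (k + 1) →₀ MvPolynomial V K))
    (_ : ∀ T, T.card ≠ n → z T = 0) (_ : ∀ T c, (z T c).IsHomogeneous D)
    (_ : ∀ T, d k (kd K key z T) = 0), ∃ w, ∀ T, d k (z T - kd K key w T) = 0 := by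
  induction n with
  | zero =>
    intro k D hD z h0 h1 h2
    obtain ⟨w, hw⟩ := koszul_exact_free key hkey z (by
      intro T
      rw [kd, Finset.sum_eq_zero]
      intro t ht
      rw [h0 _ (by simp), smul_zero]) (by
      intro j
      exact (h1 ∅ j).coeff_eq_zero (by simp; omega))
    exact ⟨w, fun T => by rw [← hw, sub_self, map_zero]⟩
  | succ n ih =>
    intro k D hD z h0 h1 h2
    have key2 := chase_step key hkey (d (k + 1)) 0 D n (fun b c => hlin k b c)
      (fun y a b c => ih (k + 1) D hD y a b c) z h0 h1 (fun T => by
        rw [← hd, LinearMap.mem_ker]; exact h2 T)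
    obtain ⟨w, hw⟩ := key2
    refine ⟨w, fun T => ?_⟩
    rw [← LinearMap.mem_ker, hd]; exact hw T

theorem chaseI (key : V → ℕ) (hkey : Function.Injective key) {Δ : Set (Finset V)}
    (h : HasTwoLinearResolution K Δ) (n : ℕ) (p : Finset V → MvPolynomial V K)
    (h0 : ∀ T, T.card ≠ n + 1 → p T = 0) (h2 : ∀ T, (p T).IsHomogeneous 2)
    (hp : ∀ T, kd K key p T ∈ srIdeal K Δ) :
    ∃ w : Finset V → MvPolynomial V K, ∀ T, p T - kd K key w T ∈ srIdeal K Δ := by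
  obtain ⟨ι, _, u, d, ε, hε1, hεs, hker, hd, hq, hl⟩ := h
  have hεf : ∀ f : ι 0 →₀ MvPolynomial V K, f ∈ LinearMap.range (d 0) ↔ f u.default ∈ srIdeal K Δ := by
    intro f
    rw [← hker, LinearMap.mem_ker]
    have : f = f u.default • Finsupp.single u.default 1 := by
      refine Finsupp.ext fun c => ?_
      rw [Subsingleton.elim c u.default]
      simp
    conv_lhs => rw [this, map_smul, hε1]
    rw [← Ideal.Quotient.eq_zero_iff_mem]
    have h3 : f u.default • (1 : MvPolynomial V K ⧸ srIdeal K Δ) = Ideal.Quotient.mk _ (f u.default) := by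
      rw [← map_one (Ideal.Quotient.mk (srIdeal K Δ))]
      change Ideal.Quotient.mk _ (f u.default * 1) = _
      rw [mul_one]
    rw [h3]
  let z : Finset V → (ι 0 →₀ MvPolynomial V K) := fun T => Finsupp.single u.default (p T)
  have hkd : ∀ z : Finset V → (ι 0 →₀ MvPolynomial V K), ∀ T, (kd K key z T) u.default = kd K key (fun T => z T u.default) T := by
    intro z T
    exact (kd_map key (Finsupp.lapply (R := MvPolynomial V K) u.default) z T).symm
  have hzd : ∀ T, z T u.default = p T := by
    intro T; simp [z]
  obtain ⟨w, hw⟩ := chase_step key hkey (d 0) 1 1 n (fun b c => hq b c)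
    (fun y a b c => chase key hkey ι d hd hl n 0 1 (by omega) y a b c) z
    (fun T hT => by simp [z, h0 T hT]) (fun T c => by
      rw [Subsingleton.elim c u.default, hzd]; exact h2 T) (fun T => by
      rw [hεf, hkd]
      simp only [hzd]
      exact hp T)
  refine ⟨fun T => w T u.default, fun T => ?_⟩
  have := (hεf _).1 (hw T)
  rw [Finsupp.sub_apply, hkd, hzd] at this
  exact this

theorem gen_deg_two {Δ : Set (Finset V)} (h : HasTwoLinearResolution K Δ) :
    srIdeal K Δ = Ideal.span {f | f ∈ srIdeal K Δ ∧ f.IsHomogeneous 2} := by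
  obtain ⟨ι, _, u, d, ε, hε1, hεs, hker, hd, hq, hl⟩ := h
  have hεf : ∀ f : ι 0 →₀ MvPolynomial V K, f ∈ LinearMap.range (d 0) ↔ f u.default ∈ srIdeal K Δ := by
    intro f
    rw [← hker, LinearMap.mem_ker]
    have : f = f u.default • Finsupp.single u.default 1 := by
      refine Finsupp.ext fun c => ?_
      rw [Subsingleton.elim c u.default]
      simp
    conv_lhs => rw [this, map_smul, hε1]
    rw [← Ideal.Quotient.eq_zero_iff_mem]
    have h3 : f u.default • (1 : MvPolynomial V K ⧸ srIdeal K Δ) = Ideal.Quotient.mk _ (f u.default) := by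
      rw [← map_one (Ideal.Quotient.mk (srIdeal K Δ))]
      change Ideal.Quotient.mk _ (f u.default * 1) = _
      rw [mul_one]
    rw [h3]
  apply le_antisymm
  · intro f hf
    obtain ⟨y, hy⟩ := (hεf (Finsupp.single u.default f)).2 (by simpa using hf)
    have hall : ∀ y : ι 1 →₀ MvPolynomial V K, (d 0 y) u.default ∈
        Ideal.span {f | f ∈ srIdeal K Δ ∧ f.IsHomogeneous 2} := by
      intro y
      induction y using Finsupp.induction_linear with
      | zero => simp
      | add f g hf hg => rw [map_add, Finsupp.add_apply]; exact Ideal.add_mem _ hf hg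
      | single b p =>
        have : Finsupp.single b p = p • Finsupp.single b 1 := by
          rw [Finsupp.smul_single, smul_eq_mul, mul_one]
        rw [this, map_smul, Finsupp.smul_apply, smul_eq_mul]
        exact Ideal.mul_mem_left _ _ (Ideal.subset_span ⟨(hεf _).1 ⟨_, rfl⟩, hq b _⟩)
    have := hall y
    rw [hy] at this
    simpa using this
  · rw [Ideal.span_le]; exact fun f hf => hf.1
end PartF


open CategoryTheory CategoryTheory.Abelian MvPolynomial
set_option linter.unusedSectionVars false
section PartG
variable {V : Type*} [Fintype V] [DecidableEq V] {K : Type*} [Field K]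

/-- The 1-skeleton. -/
def skel (Δ : Set (Finset V)) : SimpleGraph V where
  Adj u v := u ≠ v ∧ ({u, v} : Finset V) ∈ Δ
  symm := ⟨fun u v h => ⟨h.1.symm, by rw [Finset.pair_comm]; exact h.2⟩⟩
  loopless := ⟨fun u h => h.1 rfl⟩

/-- monomial exponents of the non-edges satisfying a side condition -/
def neExp (G : SimpleGraph V) (Q : V → V → Prop) : Set (V →₀ ℕ) :=
  {s | ∃ u v, u ≠ v ∧ ¬ G.Adj u v ∧ Q u v ∧ s = Finsupp.single u 1 + Finsupp.single v 1}

/-- ideal of non-edges satisfying a side condition -/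
noncomputable def neI (K : Type*) [Field K] (G : SimpleGraph V) (Q : V → V → Prop) : Ideal (MvPolynomial V K) :=
  Ideal.span ((fun s => monomial s (1 : K)) '' neExp G Q)

theorem mem_neI_of {G : SimpleGraph V} {Q : V → V → Prop} {u v : V} (h : u ≠ v) (h2 : ¬ G.Adj u v) (h3 : Q u v) :
    (X u * X v : MvPolynomial V K) ∈ neI K G Q := by
  refine Ideal.subset_span ⟨_, ⟨u, v, h, h2, h3, rfl⟩, ?_⟩
  simp [X, monomial_mul]

theorem neI_le {G : SimpleGraph V} {Q : V → V → Prop} {I : Ideal (MvPolynomial V K)}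
    (h : ∀ u v, u ≠ v → ¬ G.Adj u v → Q u v → X u * X v ∈ I) : neI K G Q ≤ I := by
  rw [neI, Ideal.span_le]
  rintro _ ⟨_, ⟨u, v, h1, h2, h3, rfl⟩, rfl⟩
  have := h u v h1 h2 h3
  simpa [X, monomial_mul] using this

theorem srIdeal_eq_mon (Δ : Set (Finset V)) : srIdeal K Δ = Ideal.span ((fun s => monomial s (1 : K)) ''
    ((fun S : Finset V => ∑ v ∈ S, Finsupp.single v 1) '' {S | S ∉ Δ})) := by
  rw [srIdeal, Set.image_image]
  congr 1
  apply Set.image_congr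
  intro S _
  simp only [X]
  rw [monomial_sum_one]

theorem srIdeal_eq_neI {Δ : Set (Finset V)} (hΔ : IsSimplicialComplex Δ) (h : HasTwoLinearResolution K Δ) :
    srIdeal K Δ = neI K (skel Δ) (fun _ _ => True) := by
  apply le_antisymm
  · rw [gen_deg_two h, Ideal.span_le]
    rintro f ⟨hf, hf2⟩
    rw [srIdeal_eq_mon, mem_ideal_span_monomial_image] at hf
    change f ∈ neI K _ _
    rw [neI, mem_ideal_span_monomial_image]
    intro m hm
    obtain ⟨_, ⟨S, hS, rfl⟩, hle⟩ := hf m hm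
    have hdeg : m.degree = 2 := by
      have := hf2 (mem_support_iff.1 hm)
      rw [Finsupp.degree_eq_weight_one]; exact this
    have hle' : (∑ v ∈ S, Finsupp.single v 1 : V →₀ ℕ).degree ≤ m.degree := Finsupp.degree_mono hle
    have hcard : S.card ≤ 2 := by
      rw [map_sum] at hle'
      simpa [hdeg] using hle'
    have hne : ∃ v : V, True := by
      by_contra hc
      push Not at hc
      have : m = 0 := by ext v; exact (hc v).elim
      rw [this] at hdeg; simp at hdeg
    obtain ⟨v0, -⟩ := hne
    have h0 : S.card ≠ 0 := by
      intro h0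
      rw [Finset.card_eq_zero] at h0
      subst h0
      exact hS (hΔ.2 _ (hΔ.1 v0) _ (by simp))
    have h1 : S.card ≠ 1 := by
      intro h1
      obtain ⟨v, rfl⟩ := Finset.card_eq_one.1 h1
      exact hS (hΔ.1 v)
    obtain ⟨u, v, huv, rfl⟩ := Finset.card_eq_two.1 (show S.card = 2 by omega)
    refine ⟨_, ⟨u, v, huv, fun hA => hS hA.2, trivial, rfl⟩, ?_⟩
    simp only at hle
    rwa [Finset.sum_pair huv] at hle
  · apply neI_le
    intro u v huv hA _
    have : (X u * X v : MvPolynomial V K) = ∏ x ∈ ({u, v} : Finset V), X x := by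
      rw [Finset.prod_pair huv]
    rw [this]
    exact Ideal.subset_span ⟨_, fun hS => hA ⟨huv, hS⟩, rfl⟩

theorem coeff_neI_edge {G : SimpleGraph V} {Q : V → V → Prop} {f : MvPolynomial V K} (hf : f ∈ neI K G Q)
    {p q : V} (h : G.Adj p q) : coeff (Finsupp.single p 1 + Finsupp.single q 1) f = 0 := by
  by_contra hc
  rw [neI, mem_ideal_span_monomial_image] at hf
  obtain ⟨_, ⟨u, v, huv, hn, -, rfl⟩, hle⟩ := hf _ (mem_support_iff.2 hc)
  have hu := hle u
  have hv := hle v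
  simp only [Finsupp.add_apply, Finsupp.single_apply] at hu hv
  have h1 : p = u ∨ q = u := by by_contra hh; push Not at hh; simp [hh.1, hh.2] at hu
  have h2 : p = v ∨ q = v := by by_contra hh; push Not at hh; simp [hh.1, hh.2] at hv
  rcases h1 with rfl | rfl <;> rcases h2 with rfl | rfl
  · exact huv rfl
  · exact hn h
  · exact hn h.symm
  · exact huv rfl

theorem coeff_neI_single {G : SimpleGraph V} {Q : V → V → Prop} {f : MvPolynomial V K} (hf : f ∈ neI K G Q)
    (p : V) : coeff (Finsupp.single p 1) f = 0 := by
  by_contra hc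
  rw [neI, mem_ideal_span_monomial_image] at hf
  obtain ⟨_, ⟨u, v, huv, hn, -, rfl⟩, hle⟩ := hf _ (mem_support_iff.2 hc)
  have hu := hle u
  have hv := hle v
  simp only [Finsupp.add_apply, Finsupp.single_apply] at hu hv
  have h1 : p = u := by by_contra hh; simp [hh] at hu
  have h2 : p = v := by by_contra hh; simp [hh] at hv
  exact huv (h1.symm.trans h2)

theorem no_cycle {Δ : Set (Finset V)} {G : SimpleGraph V} (h : HasTwoLinearResolution K Δ)
    (hI : srIdeal K Δ = neI K G (fun _ _ => True)) (a u v : V) (B : Finset V)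
    (hua : G.Adj u a) (hva : G.Adj v a) (huv : ¬ G.Adj u v) (huv' : u ≠ v)
    (hB : ∀ b ∈ B, b ≠ a ∧ ¬ G.Adj b a)
    (hconn : ∀ b ∈ B, ∀ c ∈ B, Relation.ReflTransGen (fun x y => x ∈ B ∧ y ∈ B ∧ G.Adj x y) b c)
    (bu bv : V) (hbu : bu ∈ B) (hbv : bv ∈ B) (hu : G.Adj bu u) (hv : G.Adj bv v) : False := by
  let key : V → ℕ := fun x => (Fintype.equivFin V x : ℕ)
  have hkey : Function.Injective key := fun x y hxy => (Fintype.equivFin V).injective (Fin.ext hxy)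
  have huB : u ∉ B := fun h' => (hB u h').2 hua
  have hvB : v ∉ B := fun h' => (hB v h').2 hva
  let W : Finset V := insert a (insert u (insert v B))
  have haW : a ∈ W := by simp [W]
  have huW : u ∈ W := by simp [W]
  have hvW : v ∈ W := by simp [W]
  have hBW : ∀ b ∈ B, b ∈ W := fun b hb => by simp [W, hb]
  let T0 : Finset V := (W.erase u).erase a
  have hT0 : 0 < T0.card := by
    refine Finset.card_pos.2 ⟨v, ?_⟩
    simp [T0, hvW, huv'.symm, hva.ne]
  let p : Finset V → MvPolynomial V K := fun T => if T = T0 then X u * X a else 0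
  obtain ⟨w, hw⟩ := chaseI key hkey h (T0.card - 1) p
    (fun T hT => by
      have : T ≠ T0 := by rintro rfl; omega
      simp [p, this])
    (fun T => by
      by_cases hT : T = T0
      · simp only [p, if_pos hT]
        exact (isHomogeneous_X K u).mul (isHomogeneous_X K a)
      · simp only [p, if_neg hT]
        exact isHomogeneous_zero _ _ _)
    (fun T => by
      rw [hI, kd]
      refine Ideal.sum_mem _ fun t ht => ?_
      rw [smul_eq_mul]
      by_cases hT : insert t T = T0
      · simp only [p, if_pos hT, kcf]
        have htT : t ∈ T0 := by rw [← hT]; simp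
        have h3 : X t * (X u * X a) ∈ neI K G (fun _ _ => True) := by
          simp only [T0, W, Finset.mem_erase, Finset.mem_insert] at htT
          obtain ⟨h1, h2, h3⟩ := htT
          rcases h3 with h3 | h3 | h3 | h3
          · exact (h1 h3).elim
          · exact (h2 h3).elim
          · subst h3
            rw [← mul_assoc, mul_comm (X t)]
            exact Ideal.mul_mem_right _ _ (mem_neI_of huv' huv trivial)
          · rw [mul_comm (X u), ← mul_assoc]
            exact Ideal.mul_mem_right _ _ (mem_neI_of (hB t h3).1 (hB t h3).2 trivial)
        rw [mul_assoc]
        exact Ideal.mul_mem_left _ _ h3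
      · simp only [p, if_neg hT, mul_zero]
        exact Ideal.zero_mem _)
  let F : V → K := fun x => (-1) ^ kcnt key W x * coeff (Finsupp.single x 1) (w (W.erase x))
  -- main coefficient identity
  have hEdge : ∀ x y, x ∈ W → y ∈ W → G.Adj x y → (F x = F y ↔ (W.erase x).erase y ≠ T0) := by
    intro x y hx hy hxy
    wlog hlt : key x < key y generalizing x y
    · have hne : key x ≠ key y := fun hh => hxy.ne (hkey hh)
      have := this y x hy hx hxy.symm (by omega)
      rw [Finset.erase_right_comm, eq_comm (a := F x)]
      exact this
    have hne : x ≠ y := hxy.ne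
    set T := (W.erase x).erase y with hT
    have hyT : y ∉ T := by simp [T]
    have hxT : x ∉ T := by simp [T]
    have hiy : insert y T = W.erase x := Finset.insert_erase (by simp [hy, hne.symm])
    have hix : insert x T = W.erase y := by
      rw [hT, Finset.erase_right_comm]; exact Finset.insert_erase (by simp [hx, hne])
    have hW1 : W = insert x (insert y T) := by rw [hiy, Finset.insert_erase hx]
    have hkx : kcnt key W x = kcnt key T x := by
      rw [hW1, kcnt_insert _ _ _ _ (by simp [hxT, hne]), kcnt_insert _ _ _ _ hyT]
      simp; omega
    have hky : kcnt key W y = kcnt key T y + 1 := by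
      rw [hW1, kcnt_insert _ _ _ _ (by simp [hxT, hne]), kcnt_insert _ _ _ _ hyT]
      simp [hlt]
    have h1 := hw T
    rw [hI] at h1
    have h2 := coeff_neI_edge h1 hxy
    rw [coeff_sub, coeff_kd] at h2
    have hfil : (Finset.univ.filter (fun t => t ∉ T ∧ (Finsupp.single x 1 + Finsupp.single y 1 : V →₀ ℕ) t ≠ 0)) = {x, y} := by
      ext t
      simp only [Finset.mem_filter, Finset.mem_univ, true_and, Finset.mem_insert, Finset.mem_singleton,
        Finsupp.add_apply, Finsupp.single_apply]
      constructor
      · rintro ⟨-, h3⟩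
        by_contra hc
        push Not at hc
        simp [hc.1.symm, hc.2.symm] at h3
      · rintro (rfl | rfl)
        · simp [hxT]
        · simp [hyT]
    rw [hfil, Finset.sum_pair hne, hix, hiy, add_tsub_cancel_left, add_tsub_cancel_right] at h2
    have hFx : F x = (-1) ^ kcnt key T x * coeff (Finsupp.single x 1) (w (W.erase x)) := by
      simp only [F]; rw [hkx]
    have hFy : F y = - ((-1) ^ kcnt key T y * coeff (Finsupp.single y 1) (w (W.erase y))) := by
      simp only [F]; rw [hky, pow_succ]; ring
    have hsx : ((-1 : K) ^ kcnt key T x) * ((-1 : K) ^ kcnt key T x) = 1 := by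
      rw [← mul_pow]; simp
    have hsy : ((-1 : K) ^ kcnt key T y) * ((-1 : K) ^ kcnt key T y) = 1 := by
      rw [← mul_pow]; simp
    generalize hgx : coeff (Finsupp.single x 1) (w (W.erase x)) = gx at *
    generalize hgy : coeff (Finsupp.single y 1) (w (W.erase y)) = gy at *
    generalize hex : (-1 : K) ^ kcnt key T x = ex at *
    generalize hey : (-1 : K) ^ kcnt key T y = ey at *
    rw [hFx, hFy]
    by_cases hTT : T = T0
    · have hc : coeff (Finsupp.single x 1 + Finsupp.single y 1) (p T) = 1 := by
        simp only [p, if_pos hTT]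
        have hm : (X u * X a : MvPolynomial V K) = monomial (Finsupp.single u 1 + Finsupp.single a 1) 1 := by
          simp [X, monomial_mul]
        have hxua : x ∉ T0 := hTT ▸ hxT
        have hyua : y ∉ T0 := hTT ▸ hyT
        simp only [T0, Finset.mem_erase, not_and] at hxua hyua
        have hx' : x = a ∨ x = u := by
          by_contra hc; push Not at hc; exact hxua hc.1 hc.2 hx
        have hy' : y = a ∨ y = u := by
          by_contra hc; push Not at hc; exact hyua hc.1 hc.2 hy
        rw [hm]
        rcases hx' with rfl | rfl <;> rcases hy' with rfl | rfl
        · exact (hne rfl).elim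
        · rw [add_comm]; simp [coeff_monomial]
        · simp [coeff_monomial]
        · exact (hne rfl).elim
      rw [hc] at h2
      simp only [hTT, ne_eq, not_true, iff_false]
      intro h3
      have h4 : ex * ey * (1 - (ex * gy + ey * gx)) = 0 := by rw [h2]; ring
      have h5 : ex * ey = 0 := by
        linear_combination h4 + (ey * gy) * hsx + (ex * gx) * hsy + h3
      have h6 : (1 : K) = 0 := by linear_combination ex * ey * h5 - hsx - ex * ex * hsy
      exact one_ne_zero h6
    · simp only [ne_eq, hTT, not_false_iff, iff_true]
      have hc : coeff (Finsupp.single x 1 + Finsupp.single y 1) (p T) = 0 := by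
        simp [p, hTT]
      rw [hc] at h2
      linear_combination (-ex * ey) * h2 - (ey * gy) * hsx - (ex * gx) * hsy
  have hother : ∀ x y, x ∈ W → y ∈ W → G.Adj x y → ¬ (x = u ∧ y = a) → ¬ (x = a ∧ y = u) → F x = F y := by
    intro x y hx hy hxy h1 h2
    rw [hEdge x y hx hy hxy]
    intro hT
    have hxn : x ∉ T0 := by rw [← hT]; simp
    have hyn : y ∉ T0 := by rw [← hT]; simp
    simp only [T0, Finset.mem_erase, not_and] at hxn hyn
    have hx' : x = a ∨ x = u := by
      by_contra hc; push Not at hc; exact hxn hc.1 hc.2 hx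
    have hy' : y = a ∨ y = u := by
      by_contra hc; push Not at hc; exact hyn hc.1 hc.2 hy
    have := hxy.ne
    rcases hx' with rfl | rfl <;> rcases hy' with rfl | rfl <;> simp_all
  have hpath : ∀ b c, b ∈ B → Relation.ReflTransGen (fun x y => x ∈ B ∧ y ∈ B ∧ G.Adj x y) b c → F b = F c := by
    intro b c hb hbc
    induction hbc with
    | refl => rfl
    | tail _ hh ih =>
      obtain ⟨h1, h2, h3⟩ := hh
      rw [ih]
      refine hother _ _ (hBW _ h1) (hBW _ h2) h3 ?_ ?_
      · rintro ⟨rfl, -⟩; exact huB h1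
      · rintro ⟨rfl, -⟩; exact (hB _ h1).1 rfl
  have e1 : F bu = F u := hother _ _ (hBW _ hbu) huW hu (by rintro ⟨rfl, -⟩; exact huB hbu)
    (by rintro ⟨rfl, -⟩; exact (hB _ hbu).1 rfl)
  have e2 : F bv = F v := hother _ _ (hBW _ hbv) hvW hv (by rintro ⟨rfl, -⟩; exact huB hbv)
    (by rintro ⟨rfl, -⟩; exact (hB _ hbv).1 rfl)
  have e3 : F v = F a := hother _ _ hvW haW hva (by rintro ⟨rfl, -⟩; exact huv' rfl)
    (by rintro ⟨rfl, -⟩; exact hva.ne rfl)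
  have e4 : F bu = F bv := hpath _ _ hbu (hconn _ hbu _ hbv)
  have e5 : F u = F a := by rw [← e1, e4, e2, e3]
  exact (hEdge u a huW haW hua).1 e5 rfl

end PartG


open CategoryTheory CategoryTheory.Abelian MvPolynomial
set_option linter.unusedSectionVars false
section PartH
variable {V : Type*} [Fintype V] [DecidableEq V] {K : Type*} [Field K]

/-- no generalised induced cycle -/
def NoBad (G : SimpleGraph V) : Prop :=
  ∀ (a u v : V) (B : Finset V),
    G.Adj u a → G.Adj v a → ¬ G.Adj u v → u ≠ v →
    (∀ b ∈ B, b ≠ a ∧ ¬ G.Adj b a) →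
    (∀ b ∈ B, ∀ c ∈ B, Relation.ReflTransGen (fun x y => x ∈ B ∧ y ∈ B ∧ G.Adj x y) b c) →
    ∀ (bu bv : V), bu ∈ B → bv ∈ B → G.Adj bu u → G.Adj bv v → False

theorem dirac (G : SimpleGraph V) (hG : NoBad G) (n : ℕ) : ∀ W : Finset V, W.card = n → ∀ a ∈ W,
    (∃ b ∈ W, b ≠ a ∧ ¬ G.Adj b a) →
    ∃ s ∈ W, s ≠ a ∧ ¬ G.Adj s a ∧ ∀ x ∈ W, ∀ y ∈ W, G.Adj s x → G.Adj s y → x ≠ y → G.Adj x y := by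
  classical
  induction n using Nat.strong_induction_on with
  | _ n ih =>
  intro W hW a ha ⟨b0, hb0W, hb0a, hb0n⟩
  set U : Finset V := W.filter (fun x => x ≠ a ∧ ¬ G.Adj x a) with hU
  set r : V → V → Prop := fun x y => x ∈ U ∧ y ∈ U ∧ G.Adj x y with hr
  set B : Finset V := U.filter (fun x => Relation.ReflTransGen r b0 x) with hB
  have hb0B : b0 ∈ B := by
    simp only [hB, hU, Finset.mem_filter]
    exact ⟨⟨hb0W, hb0a, hb0n⟩, .refl⟩
  have hBU : ∀ b ∈ B, b ∈ U := fun b hb => (Finset.mem_filter.1 hb).1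
  have hBW : ∀ b ∈ B, b ∈ W := fun b hb => (Finset.mem_filter.1 (hBU b hb)).1
  have hBa : ∀ b ∈ B, b ≠ a ∧ ¬ G.Adj b a := fun b hb => (Finset.mem_filter.1 (hBU b hb)).2
  have hext : ∀ b ∈ B, ∀ c ∈ U, G.Adj b c → c ∈ B := by
    intro b hb c hc hbc
    exact Finset.mem_filter.2 ⟨hc, (Finset.mem_filter.1 hb).2.tail ⟨hBU b hb, hc, hbc⟩⟩
  have h1 : ∀ c, Relation.ReflTransGen r b0 c → c ∈ B ∧
      Relation.ReflTransGen (fun x y => x ∈ B ∧ y ∈ B ∧ G.Adj x y) b0 c := by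
    intro c hc
    induction hc with
    | refl => exact ⟨hb0B, .refl⟩
    | tail _ hh ih2 =>
      obtain ⟨h2, h3, h4⟩ := hh
      have := hext _ ih2.1 _ h3 h4
      exact ⟨this, ih2.2.tail ⟨ih2.1, this, h4⟩⟩
  have hconn : ∀ b ∈ B, ∀ c ∈ B, Relation.ReflTransGen (fun x y => x ∈ B ∧ y ∈ B ∧ G.Adj x y) b c := by
    intro b hb c hc
    have e1 := (h1 b (Finset.mem_filter.1 hb).2).2
    have e2 := (h1 c (Finset.mem_filter.1 hc).2).2
    refine Relation.ReflTransGen.trans ?_ e2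
    have hsym : Std.Symm (fun x y => x ∈ B ∧ y ∈ B ∧ G.Adj x y) := ⟨fun x y h => ⟨h.2.1, h.1, h.2.2.symm⟩⟩
    exact (Relation.ReflTransGen.stdSymm (r := fun x y => x ∈ B ∧ y ∈ B ∧ G.Adj x y)).symm _ _ e1
  set C : Finset V := W.filter (fun x => x ∉ B ∧ ∃ b ∈ B, G.Adj b x) with hC
  have hCW : ∀ c ∈ C, c ∈ W := fun c hc => (Finset.mem_filter.1 hc).1
  have hCa : ∀ c ∈ C, G.Adj c a := by
    intro c hc
    obtain ⟨hcW, hcB, b, hb, hbc⟩ := Finset.mem_filter.1 hc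
    by_contra hn
    by_cases hca : c = a
    · subst hca; exact (hBa b hb).2 hbc
    · exact hcB (hext b hb c (Finset.mem_filter.2 ⟨hcW, hca, hn⟩) hbc)
  have hCC : ∀ x ∈ C, ∀ y ∈ C, x ≠ y → G.Adj x y := by
    intro x hx y hy hxy
    by_contra hn
    obtain ⟨_, _, bx, hbx, hbx'⟩ := Finset.mem_filter.1 hx
    obtain ⟨_, _, by', hby, hby'⟩ := Finset.mem_filter.1 hy
    exact hG a x y B (hCa x hx) (hCa y hy) hn hxy hBa hconn bx by' hbx hby hbx' hby'
  have hnb : ∀ s ∈ B, ∀ x ∈ W, G.Adj s x → x ∈ B ∪ C := by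
    intro s hs x hx hsx
    by_cases hxB : x ∈ B
    · exact Finset.mem_union_left _ hxB
    · exact Finset.mem_union_right _ (Finset.mem_filter.2 ⟨hx, hxB, s, hs, hsx⟩)
  have hBCW : B ∪ C ⊆ W := Finset.union_subset hBW hCW
  have haBC : a ∉ B ∪ C := by
    intro h
    rcases Finset.mem_union.1 h with h | h
    · exact (hBa a h).1 rfl
    · exact (hCa a h).ne rfl
  have hlt : (B ∪ C).card < n := by
    rw [← hW]
    exact Finset.card_lt_card ⟨hBCW, fun h => haBC (h ha)⟩
  have hltB : B.card < n := lt_of_le_of_lt (Finset.card_le_card Finset.subset_union_left) hlt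
  suffices ∃ s ∈ B, ∀ x ∈ B ∪ C, ∀ y ∈ B ∪ C, G.Adj s x → G.Adj s y → x ≠ y → G.Adj x y by
    obtain ⟨s, hs, h⟩ := this
    refine ⟨s, hBW s hs, (hBa s hs).1, (hBa s hs).2, fun x hx y hy hsx hsy => ?_⟩
    exact h x (hnb s hs x hx hsx) y (hnb s hs y hy hsy) hsx hsy
  by_cases hc1 : ∃ c ∈ C, ∃ d ∈ B ∪ C, d ≠ c ∧ ¬ G.Adj d c
  · obtain ⟨c, hc, d, hd, hdc, hdn⟩ := hc1
    obtain ⟨s, hs, hsc, hsn, h⟩ := ih _ hlt (B ∪ C) rfl c (Finset.mem_union_right _ hc) ⟨d, hd, hdc, hdn⟩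
    refine ⟨s, ?_, h⟩
    rcases Finset.mem_union.1 hs with h' | h'
    · exact h'
    · exact (hsn (hCC s h' c hc hsc)).elim
  · push Not at hc1
    by_cases hc2 : ∃ b ∈ B, ∃ d ∈ B, d ≠ b ∧ ¬ G.Adj d b
    · obtain ⟨b, hb, hd⟩ := hc2
      obtain ⟨s, hs, _, _, h⟩ := ih _ hltB B rfl b hb hd
      refine ⟨s, hs, fun x hx y hy hsx hsy hxy => ?_⟩
      rcases Finset.mem_union.1 hx with hx' | hx'
      · rcases Finset.mem_union.1 hy with hy' | hy'
        · exact h x hx' y hy' hsx hsy hxy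
        · exact hc1 y hy' x hx hxy
      · exact (hc1 x hx' y hy hxy.symm).symm
    · push Not at hc2
      refine ⟨b0, hb0B, fun x hx y hy hsx hsy hxy => ?_⟩
      rcases Finset.mem_union.1 hx with hx' | hx'
      · rcases Finset.mem_union.1 hy with hy' | hy'
        · exact hc2 y hy' x hx' hxy
        · exact hc1 y hy' x hx hxy
      · exact (hc1 x hx' y hy hxy.symm).symm

theorem exists_peo (G : SimpleGraph V) (hG : NoBad G) (n : ℕ) : ∀ W : Finset V, W.card = n →
    ∃ key : V → ℕ, Set.InjOn key W ∧ (∀ v ∈ W, key v < n) ∧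
      ∀ s ∈ W, ∀ x ∈ W, ∀ y ∈ W, key x < key s → key y < key s → G.Adj s x → G.Adj s y → x ≠ y → G.Adj x y := by
  induction n with
  | zero =>
    intro W hW
    rw [Finset.card_eq_zero] at hW
    subst hW
    exact ⟨fun _ => 0, by simp⟩
  | succ n ih =>
    intro W hW
    have hs : ∃ s ∈ W, ∀ x ∈ W, ∀ y ∈ W, G.Adj s x → G.Adj s y → x ≠ y → G.Adj x y := by
      by_cases hc : ∃ a ∈ W, ∃ b ∈ W, b ≠ a ∧ ¬ G.Adj b a
      · obtain ⟨a, ha, hb⟩ := hc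
        obtain ⟨s, hs, _, _, h⟩ := dirac G hG _ W rfl a ha hb
        exact ⟨s, hs, h⟩
      · push Not at hc
        obtain ⟨s, hs⟩ : W.Nonempty := Finset.card_pos.1 (by omega)
        exact ⟨s, hs, fun x hx y hy _ _ hxy => hc y hy x hx hxy⟩
    obtain ⟨s, hs, hsimp⟩ := hs
    obtain ⟨key, k1, k2, k3⟩ := ih (W.erase s) (by rw [Finset.card_erase_of_mem hs, hW]; rfl)
    have hval : ∀ v ∈ W, v ≠ s → Function.update key s n v < n := by
      intro v hv hvs
      rw [Function.update_of_ne hvs]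
      exact k2 v (Finset.mem_erase.2 ⟨hvs, hv⟩)
    refine ⟨Function.update key s n, ?_, ?_, ?_⟩
    · intro x hx y hy hxy
      by_cases hxs : x = s
      · by_cases hys : y = s
        · rw [hxs, hys]
        · have := hval y hy hys
          rw [← hxy, hxs, Function.update_self] at this; omega
      · by_cases hys : y = s
        · have := hval x hx hxs
          rw [hxy, hys, Function.update_self] at this; omega
        · rw [Function.update_of_ne hxs, Function.update_of_ne hys] at hxy
          exact k1 (by simp [hxs]; exact hx) (by simp [hys]; exact hy) hxy
    · intro v hv
      by_cases hvs : v = s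
      · rw [hvs, Function.update_self]; omega
      · have := hval v hv hvs; omega
    · intro t ht x hx y hy hxt hyt
      by_cases hts : t = s
      · subst hts; exact hsimp x hx y hy
      · have := hval t ht hts
        have hxs : x ≠ s := by
          rintro rfl; rw [Function.update_self] at hxt; omega
        have hys : y ≠ s := by
          rintro rfl; rw [Function.update_self] at hyt; omega
        rw [Function.update_of_ne hts, Function.update_of_ne hxs] at hxt
        rw [Function.update_of_ne hts, Function.update_of_ne hys] at hyt
        exact k3 t (by simp [*]) x (by simp [*]) y (by simp [*]) hxt hyt

end PartH


set_option linter.unusedSectionVars false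
section PartJ

/-- The shuffling property for lists. -/
def HProp (L : ℕ → List ℕ) (j : ℕ) : Prop :=
  ∀ i < j, ∀ a z, (L i)[a]? = some z → ∃ b ≤ a + (j - 1 - i), ∃ w, (L j)[b]? = some w ∧ (w = i ∨ w = z)

theorem exists_lists (A : ℕ → ℕ → Prop) (N : ℕ)
    (hA : ∀ j < N, ∀ i < j, ∀ k < j, A j i → A j k → k < i → A i k) : ∀ n ≤ N,
    ∃ L : ℕ → List ℕ, ∀ j < n, (∀ i, i ∈ L j ↔ i < j ∧ ¬ A j i) ∧ (L j).Nodup ∧ HProp L j := by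
  classical
  intro n
  induction n with
  | zero => intro _; exact ⟨fun _ => [], by simp⟩
  | succ n ih =>
    intro hn
    obtain ⟨L, hL⟩ := ih (by omega)
    suffices ∃ l : List ℕ, (∀ i, i ∈ l ↔ i < n ∧ ¬ A n i) ∧ l.Nodup ∧
        ∀ i < n, ∀ a z, (L i)[a]? = some z → ∃ b ≤ a + (n - 1 - i), ∃ w, l[b]? = some w ∧ (w = i ∨ w = z) by
      obtain ⟨l, h1, h2, h3⟩ := this
      refine ⟨Function.update L n l, fun j hj => ?_⟩
      by_cases hjn : j = n
      · subst hjn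
        rw [Function.update_self]
        refine ⟨h1, h2, fun i hi a z haz => ?_⟩
        rw [Function.update_of_ne (by omega)] at haz
        rw [Function.update_self]
        exact h3 i hi a z haz
      · obtain ⟨g1, g2, g3⟩ := hL j (by omega)
        rw [Function.update_of_ne hjn]
        refine ⟨g1, g2, fun i hi a z haz => ?_⟩
        rw [Function.update_of_ne (by omega)] at haz
        rw [Function.update_of_ne hjn]
        exact g3 i hi a z haz
    by_cases hex : ∃ i < n, A n i
    · -- maximal neighbour
      obtain ⟨m, ⟨hmn, hm⟩, hmax⟩ : ∃ m, (m < n ∧ A n m) ∧ ∀ i, i < n → A n i → i ≤ m := by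
        have hne : ((Finset.range n).filter (fun i => A n i)).Nonempty := by
          obtain ⟨i, hi, hi'⟩ := hex
          exact ⟨i, by simp [hi, hi']⟩
        have hmm := Finset.max'_mem _ hne
        rw [Finset.mem_filter, Finset.mem_range] at hmm
        refine ⟨_, hmm, fun i hi hi' => ?_⟩
        exact Finset.le_max' ((Finset.range n).filter (fun i => A n i)) i (by simp [hi, hi'])
      obtain ⟨g1, g2, g3⟩ := hL m hmn
      have hsub : ∀ k ∈ L m, ¬ A n k := by
        intro k hk hnk
        obtain ⟨h1, h2⟩ := (g1 k).1 hk
        exact h2 (hA n (by omega) m hmn k (by omega) hm hnk h1)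
      set s1 : List ℕ := (List.range (n - 1 - m)).map (fun t => n - 1 - t) with hs1
      set s3 : List ℕ := ((Finset.range m).filter (fun i => ¬ A n i ∧ i ∉ L m)).toList with hs3
      have hlen : s1.length = n - 1 - m := by simp [hs1]
      have hmem1 : ∀ i, i ∈ s1 ↔ m < i ∧ i < n := by
        intro i
        simp only [hs1, List.mem_map, List.mem_range]
        constructor
        · rintro ⟨t, ht, rfl⟩; omega
        · rintro ⟨h1, h2⟩; exact ⟨n - 1 - i, by omega, by omega⟩
      have hget2 : ∀ b w, (L m)[b]? = some w → (s1 ++ (L m ++ s3))[n - 1 - m + b]? = some w := by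
        intro b w hb
        rw [List.getElem?_append_right (by omega), hlen, Nat.add_sub_cancel_left,
          List.getElem?_append_left (List.getElem?_eq_some_iff.1 hb).1, hb]
      refine ⟨s1 ++ (L m ++ s3), ?_, ?_, ?_⟩
      · intro i
        simp only [List.mem_append, hmem1, g1]
        simp only [hs3, Finset.mem_toList, Finset.mem_filter, Finset.mem_range]
        constructor
        · rintro (⟨h1, h2⟩ | ⟨h1, h2⟩ | ⟨h1, h2, h3⟩)
          · exact ⟨h2, fun h => absurd (hmax i h2 h) (by omega)⟩
          · exact ⟨by omega, hsub i ((g1 i).2 ⟨h1, h2⟩)⟩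
          · exact ⟨by omega, h2⟩
        · rintro ⟨h1, h2⟩
          rcases lt_trichotomy i m with h | h | h
          · by_cases hA' : A m i
            · exact Or.inr (Or.inr ⟨h, h2, fun h' => ((g1 i).1 h').2 hA'⟩)
            · exact Or.inr (Or.inl ⟨h, hA'⟩)
          · subst h; exact (h2 hm).elim
          · exact Or.inl ⟨h, h1⟩
      · rw [List.nodup_append, List.nodup_append]
        refine ⟨?_, ⟨g2, Finset.nodup_toList _, ?_⟩, ?_⟩
        · refine List.Nodup.map_on ?_ (List.nodup_range)
          intro x hx y hy hxy
          simp at hx hy; omega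
        · rintro x hx y hy rfl
          simp only [hs3, Finset.mem_toList, Finset.mem_filter, Finset.mem_range] at hy
          exact hy.2.2 hx
        · rintro x hx y hy rfl
          rw [hmem1] at hx
          rw [List.mem_append] at hy
          rcases hy with hy | hy
          · have := ((g1 x).1 hy).1; omega
          · simp only [hs3, Finset.mem_toList, Finset.mem_filter, Finset.mem_range] at hy; omega
      · intro i hi a z haz
        rcases lt_trichotomy i m with h | h | h
        · obtain ⟨b, hb, w, hw, hw'⟩ := g3 i h a z haz
          exact ⟨n - 1 - m + b, by omega, w, hget2 b w hw, hw'⟩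
        · subst h
          exact ⟨n - 1 - i + a, by omega, z, hget2 a z haz, Or.inr rfl⟩
        · refine ⟨n - 1 - i, by omega, i, ?_, Or.inl rfl⟩
          rw [List.getElem?_append_left (by omega)]
          simp only [hs1, List.getElem?_map, List.getElem?_range (show n - 1 - i < n - 1 - m by omega), Option.map_some, Option.some.injEq]
          omega
    · push Not at hex
      refine ⟨(List.range n).map (fun t => n - 1 - t), ?_, ?_, ?_⟩
      · intro i
        simp only [List.mem_map, List.mem_range]
        constructor
        · rintro ⟨t, ht, rfl⟩; exact ⟨by omega, hex _ (by omega)⟩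
        · rintro ⟨h1, h2⟩; exact ⟨n - 1 - i, by omega, by omega⟩
      · refine List.Nodup.map_on ?_ (List.nodup_range)
        intro x hx y hy hxy
        simp at hx hy; omega
      · intro i hi a z haz
        refine ⟨n - 1 - i, by omega, i, ?_, Or.inl rfl⟩
        simp only [List.getElem?_map, List.getElem?_range (show n - 1 - i < n by omega), Option.map_some, Option.some.injEq]
        omega

theorem schmitt_vogel {R : Type*} [CommRing R] (x : ℕ → R) (A : ℕ → ℕ → Prop) (N p : ℕ)
    (hA : ∀ j < N, ∀ i < j, ∀ k < j, A j i → A j k → k < i → A i k)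
    (hp : ∀ j < N, ∀ Y : Finset ℕ, (∀ i ∈ Y, i < j ∧ ¬ A j i) → Y.Nonempty → (N - 1 - j) + Y.card ≤ p) :
    ∃ g : Fin p → R, (Ideal.span (Set.range g)).radical =
      (Ideal.span {f | ∃ j i, j < N ∧ i < j ∧ ¬ A j i ∧ f = x j * x i}).radical := by
  classical
  obtain ⟨L, hL⟩ := exists_lists A N hA N le_rfl
  let tm : ℕ → ℕ → R := fun l i => if N - 1 - i ≤ l then (((L i)[l - (N - 1 - i)]?).elim 0 (fun z => x i * x z)) else 0
  let g : ℕ → R := fun l => ∑ i ∈ Finset.range N, tm l i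
  have hcol : ∀ i < N, ∀ a z, (L i)[a]? = some z → (N - 1 - i) + a < p := by
    intro i hi a z h
    obtain ⟨ha, hz⟩ := List.getElem?_eq_some_iff.1 h
    obtain ⟨g1, g2, -⟩ := hL i hi
    have hmem : z ∈ L i := hz ▸ List.getElem_mem ha
    have := hp i hi (L i).toFinset (fun k hk => (g1 k).1 (List.mem_toFinset.1 hk))
      ⟨z, List.mem_toFinset.2 hmem⟩
    rw [List.toFinset_card_of_nodup g2] at this
    omega
  refine ⟨fun l => g l, ?_⟩
  apply le_antisymm
  · apply Ideal.radical_mono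
    rw [Ideal.span_le]
    rintro _ ⟨l, rfl⟩
    refine Ideal.sum_mem _ fun i hi => ?_
    simp only [tm]
    split_ifs with h
    · cases hz : (L i)[(l : ℕ) - (N - 1 - i)]? with
      | none => simp
      | some z =>
        rw [Option.elim_some]
        obtain ⟨ha, hz'⟩ := List.getElem?_eq_some_iff.1 hz
        have hmem : z ∈ L i := hz' ▸ List.getElem_mem ha
        have hiN := Finset.mem_range.1 hi
        have := ((hL i hiN).1 z).1 hmem
        exact Ideal.subset_span ⟨i, z, hiN, this.1, this.2, rfl⟩
    · exact Ideal.zero_mem _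
  · rw [Ideal.radical_le_radical_iff, Ideal.span_le]
    rintro _ ⟨j, i, hj, hij, hn, rfl⟩
    change _ ∈ Ideal.radical _
    rw [Ideal.radical_eq_sInf, Submodule.mem_sInf]
    rintro P ⟨hP, hPp⟩
    have hg : ∀ l < p, g l ∈ P := fun l hl => hP (Ideal.subset_span ⟨⟨l, hl⟩, rfl⟩)
    have main : ∀ c, ∀ i < N, ∀ a z, (L i)[a]? = some z → (N - 1 - i) + a = c → x i * x z ∈ P := by
      intro c
      induction c using Nat.strong_induction_on with
      | _ c ih =>
      intro i hi a z haz hc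
      by_contra hnot
      have hxi : x i ∉ P := fun h => hnot (Ideal.mul_mem_right _ _ h)
      have hxz : x z ∉ P := fun h => hnot (Ideal.mul_mem_left _ _ h)
      have hgc := hg c (hc ▸ hcol i hi a z haz)
      have hti : tm c i = x i * x z := by
        simp only [tm]
        rw [if_pos (by omega), show c - (N - 1 - i) = a by omega, haz, Option.elim_some]
      rw [show g c = tm c i + ∑ k ∈ (Finset.range N).erase i, tm c k from
        (Finset.add_sum_erase _ _ (Finset.mem_range.2 hi)).symm, hti] at hgc
      refine hnot ((Ideal.add_mem_iff_left _ ?_).1 hgc)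
      refine Ideal.sum_mem _ fun k hk => ?_
      obtain ⟨hki, hkN⟩ := Finset.mem_erase.1 hk
      rw [Finset.mem_range] at hkN
      simp only [tm]
      split_ifs with h
      · cases hz : (L k)[c - (N - 1 - k)]? with
        | none => simp
        | some z' =>
          rw [Option.elim_some]
          rcases lt_or_gt_of_ne hki with hlt | hlt
          · obtain ⟨b, hb, w, hw, hw'⟩ := (hL i hi).2.2 k hlt _ _ hz
            have := ih (N - 1 - i + b) (by omega) i hi b w hw rfl
            have hxw := (hPp.mem_or_mem this).resolve_left hxi
            rcases hw' with rfl | rfl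
            · exact Ideal.mul_mem_right _ _ hxw
            · exact Ideal.mul_mem_left _ _ hxw
          · obtain ⟨b, hb, w, hw, hw'⟩ := (hL k hkN).2.2 i hlt _ _ haz
            have := ih (N - 1 - k + b) (by omega) k hkN b w hw rfl
            refine Ideal.mul_mem_right _ _ ((hPp.mem_or_mem this).resolve_right ?_)
            rcases hw' with rfl | rfl
            · exact hxi
            · exact hxz
      · exact Ideal.zero_mem _
    have hmem := ((hL j hj).1 i).2 ⟨hij, hn⟩
    obtain ⟨a, ha, hai⟩ := List.getElem_of_mem hmem
    exact main _ j hj a i (List.getElem?_eq_some_iff.2 ⟨ha, hai⟩) rfl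

end PartJ


open CategoryTheory CategoryTheory.Abelian MvPolynomial
set_option linter.unusedSectionVars false
section PartP
open Limits

theorem pd_of_res {A : Type*} [Category A] [Abelian A] {Z : A} (P : ProjectiveResolution Z)
    (m : ℕ) (h : ∀ i, m < i → IsZero (P.complex.X i)) : HasProjectiveDimensionLT Z (m + 1) := by
  let := HasExt.standard A
  rw [hasProjectiveDimensionLT_iff]
  intro i hi Y e
  obtain ⟨f, hf, rfl⟩ := P.extMk_surjective e (i + 1) rfl
  have hf0 : f = 0 := (h i (by omega)).eq_of_src _ _
  subst hf0
  exact P.extMk_zero _ _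

/-- splice a resolution of the kernel -/
theorem splice {A : Type*} [Category A] [Abelian A] {L P Z : A} (ι : L ⟶ P) (π : P ⟶ Z) (w : ι ≫ π = 0)
    (hS : (ShortComplex.mk ι π w).ShortExact) [Projective P] (Q : ProjectiveResolution L)
    (m : ℕ) (hQ : ∀ i, m < i → IsZero (Q.complex.X i)) :
    ∃ R : ProjectiveResolution Z, ∀ i, m + 1 < i → IsZero (R.complex.X i) := by
  have hm : Mono ι := hS.mono_f
  have he : Epi π := hS.epi_g
  have w1 : Q.complex.d 1 0 ≫ (Q.π.f 0 : Q.complex.X 0 ⟶ L) = 0 := Q.complex_d_comp_π_f_zero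
  have hepi : Epi (Q.π.f 0 : Q.complex.X 0 ⟶ L) := inferInstanceAs (Epi (Q.π.f 0))
  let q : Q.complex.X 0 ⟶ L := Q.π.f 0
  have w2 : Q.complex.d 1 0 ≫ (q ≫ ι) = 0 := by rw [← Category.assoc, show Q.complex.d 1 0 ≫ q = 0 from w1, zero_comp]
  have ex0 : (ShortComplex.mk (Q.complex.d 1 0) q w1).Exact :=
    ShortComplex.exact_of_g_is_cokernel _ Q.isColimitCokernelCofork
  have ex1 : (ShortComplex.mk (Q.complex.d 1 0) (q ≫ ι) w2).Exact := by
    let α : ShortComplex.mk (Q.complex.d 1 0) q w1 ⟶ ShortComplex.mk (Q.complex.d 1 0) (q ≫ ι) w2 :=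
      { τ₁ := 𝟙 _, τ₂ := 𝟙 _, τ₃ := ι }
    have : Epi α.τ₁ := inferInstanceAs (Epi (𝟙 _))
    have : IsIso α.τ₂ := inferInstanceAs (IsIso (𝟙 _))
    have : Mono α.τ₃ := hm
    exact (ShortComplex.exact_iff_of_epi_of_isIso_of_mono α).1 ex0
  have w3 : (q ≫ ι) ≫ π = 0 := by rw [Category.assoc, w, comp_zero]
  have ex2 : (ShortComplex.mk (q ≫ ι) π w3).Exact := by
    let α : ShortComplex.mk (q ≫ ι) π w3 ⟶ ShortComplex.mk ι π w :=
      { τ₁ := q, τ₂ := 𝟙 _, τ₃ := 𝟙 _ }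
    have : Epi α.τ₁ := hepi
    have : IsIso α.τ₂ := inferInstanceAs (IsIso (𝟙 _))
    have : Mono α.τ₃ := inferInstanceAs (Mono (𝟙 _))
    exact (ShortComplex.exact_iff_of_epi_of_isIso_of_mono α).2 hS.exact
  let D := ChainComplex.augment Q.complex (q ≫ ι) w2
  refine ⟨{ complex := D
            projective := ?_
            π := (ChainComplex.toSingle₀Equiv D Z).symm ⟨π, w3⟩
            quasiIso := ⟨fun n => ?_⟩ }, ?_⟩
  · rintro (_ | n)
    · assumption
    · exact Q.projective n
  · rcases n with _ | n
    · rw [ChainComplex.quasiIsoAt₀_iff, ShortComplex.quasiIso_iff_of_zeros']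
      · refine (ShortComplex.exact_and_epi_g_iff_of_iso ?_).2 ⟨ex2, he⟩
        exact ShortComplex.isoMk (Iso.refl _) (Iso.refl _) (Iso.refl _)
          ((Category.id_comp (q ≫ ι)).trans (Category.comp_id (q ≫ ι)).symm)
          ((Category.id_comp π).trans (((ChainComplex.toSingle₀Equiv_symm_apply_f_zero (C := D) π w3).symm).trans
            (Category.comp_id (((ChainComplex.toSingle₀Equiv D Z).symm ⟨π, w3⟩).f 0)).symm))
      all_goals rfl
    · rw [quasiIsoAt_iff_exactAt']
      · rw [HomologicalComplex.exactAt_iff' _ (n + 1 + 1) (n + 1) n (by simp) (by simp)]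
        rcases n with _ | n
        · exact ex1
        · exact Q.exact_succ n
      · apply ChainComplex.exactAt_succ_single_obj
  · rintro (_ | i) hi
    · omega
    · exact hQ i (by omega)

theorem res_of_pd {A : Type*} [Category A] [Abelian A] [EnoughProjectives A] (m : ℕ) : ∀ (Z : A)
    (_ : HasProjectiveDimensionLT Z (m + 1)),
    ∃ P : ProjectiveResolution Z, ∀ i, m < i → IsZero (P.complex.X i) := by
  induction m with
  | zero =>
    intro Z h
    have : Projective Z := projective_iff_hasProjectiveDimensionLT_one.2 h
    refine ⟨ProjectiveResolution.self Z, fun i hi => ?_⟩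
    apply HomologicalComplex.isZero_single_obj_X
    omega
  | succ m ih =>
    intro Z h
    have hS : (ShortComplex.mk (kernel.ι (Projective.π Z)) (Projective.π Z) (by simp)).ShortExact :=
      { exact := ShortComplex.exact_of_f_is_kernel _ (kernelIsKernel _) }
    have hk := (hS.hasProjectiveDimensionLT_X₃_iff m (inferInstanceAs (Projective (Projective.over Z)))).1 h
    obtain ⟨Q, hQ⟩ := ih _ hk
    exact splice _ _ _ hS Q m hQ

end PartP


open CategoryTheory CategoryTheory.Abelian MvPolynomial
set_option linter.unusedSectionVars false
section PartM
variable {V : Type*} [Fintype V] [DecidableEq V] {K : Type*} [Field K]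

open Classical in
/-- earlier non-neighbours -/
noncomputable def Yset (G : SimpleGraph V) (key : V → ℕ) (v : V) : Finset V :=
  Finset.univ.filter (fun y => key y < key v ∧ ¬ G.Adj v y)

open Classical in
/-- earlier neighbours -/
noncomputable def Fset (G : SimpleGraph V) (key : V → ℕ) (v : V) : Finset V :=
  Finset.univ.filter (fun y => key y < key v ∧ G.Adj v y)

theorem mem_Yset {G : SimpleGraph V} {key : V → ℕ} {v y : V} :
    y ∈ Yset G key v ↔ key y < key v ∧ ¬ G.Adj v y := by simp [Yset]

theorem mem_Fset {G : SimpleGraph V} {key : V → ℕ} {v y : V} :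
    y ∈ Fset G key v ↔ key y < key v ∧ G.Adj v y := by simp [Fset]

/-- perfect elimination order -/
structure PEO (G : SimpleGraph V) (key : V → ℕ) : Prop where
  inj : Function.Injective key
  lt : ∀ v, key v < Fintype.card V
  peo : ∀ s x y, key x < key s → key y < key s → G.Adj s x → G.Adj s y → x ≠ y → G.Adj x y

theorem PEO.surj {G : SimpleGraph V} {key : V → ℕ} (h : PEO G key) (j : ℕ) (hj : j < Fintype.card V) :
    ∃ v, key v = j := by
  let f : V → Fin (Fintype.card V) := fun v => ⟨key v, h.lt v⟩
  have hf : Function.Injective f := fun a b hab => h.inj (congrArg Fin.val hab)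
  have hb : Function.Bijective f := (Fintype.bijective_iff_injective_and_card f).2 ⟨hf, by simp⟩
  obtain ⟨v, hv⟩ := hb.2 ⟨j, hj⟩
  exact ⟨v, congrArg Fin.val hv⟩

theorem PEO.card_lt {G : SimpleGraph V} {key : V → ℕ} (h : PEO G key) (v : V) :
    (Fset G key v).card + (Yset G key v).card = key v := by
  classical
  rw [← Finset.card_union_of_disjoint]
  · have : (Fset G key v ∪ Yset G key v).image key = Finset.range (key v) := by
      ext j
      simp only [Finset.mem_image, Finset.mem_union, mem_Fset, mem_Yset, Finset.mem_range]
      constructor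
      · rintro ⟨x, hx, rfl⟩; rcases hx with hx | hx <;> exact hx.1
      · intro hj
        obtain ⟨x, rfl⟩ := h.surj j (lt_trans hj (h.lt v))
        exact ⟨x, by tauto, rfl⟩
    rw [← Finset.card_image_of_injective _ h.inj, this, Finset.card_range]
  · rw [Finset.disjoint_left]
    intro x hx hy
    exact (mem_Yset.1 hy).2 (mem_Fset.1 hx).2

theorem neI_rec {G : SimpleGraph V} {key : V → ℕ} (h : PEO G key) (v : V) :
    neI K G (fun a b => key a < key v + 1 ∧ key b < key v + 1) =
      neI K G (fun a b => key a < key v ∧ key b < key v) ⊔ Ideal.span {X v} * varI K (Yset G key v) := by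
  have hlast : ∀ u, key u < key v + 1 → u ≠ v → key u < key v := by
    intro u hu huv
    have : key u ≠ key v := fun hh => huv (h.inj hh)
    omega
  apply le_antisymm
  · apply neI_le
    rintro a b hab hn ⟨ha, hb⟩
    by_cases hav : a = v
    · subst hav
      refine Ideal.mem_sup_right (Ideal.mul_mem_mul (Ideal.mem_span_singleton_self _) ?_)
      exact X_mem_varI (mem_Yset.2 ⟨hlast b hb hab.symm, hn⟩)
    · by_cases hbv : b = v
      · subst hbv
        rw [mul_comm (X a) (X b)]
        refine Ideal.mem_sup_right (Ideal.mul_mem_mul (Ideal.mem_span_singleton_self _) ?_)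
        exact X_mem_varI (mem_Yset.2 ⟨hlast a ha hab, fun h => hn h.symm⟩)
      · exact Ideal.mem_sup_left (mem_neI_of hab hn ⟨hlast a ha hav, hlast b hb hbv⟩)
  · apply sup_le
    · apply neI_le
      rintro a b hab hn ⟨ha, hb⟩
      exact mem_neI_of hab hn ⟨by omega, by omega⟩
    · rw [Ideal.span_singleton_mul_le_iff]
      intro z hz
      rw [varI] at hz
      induction hz using Submodule.span_induction with
      | mem z hz =>
        obtain ⟨y, hy, rfl⟩ := hz
        have hy' := mem_Yset.1 hy
        have hne : v ≠ y := by
          intro hvy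
          rw [hvy] at hy'
          exact lt_irrefl _ hy'.1
        exact mem_neI_of hne hy'.2 ⟨by omega, by omega⟩
      | zero => rw [mul_zero]; exact Ideal.zero_mem _
      | add a b _ _ ha hb => rw [mul_add]; exact Ideal.add_mem _ ha hb
      | smul c a _ ha => rw [smul_eq_mul, mul_left_comm]; exact Ideal.mul_mem_left _ _ ha

theorem pd_upper {G : SimpleGraph V} {key : V → ℕ} (h : PEO G key) (p : ℕ)
    (hp : ∀ v, (Yset G key v).Nonempty → (Fintype.card V - 1 - key v) + (Yset G key v).card ≤ p) :
    PDLT (neI K G (fun _ _ => True)) (p + 1) := by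
  have main : ∀ j ≤ Fintype.card V, ∃ P, PDLT (neI K G (fun u v => key u < j ∧ key v < j)) (P + 1) ∧
      (P + (Fintype.card V - j) ≤ p ∨ P = 0) := by
    intro j
    induction j with
    | zero =>
      intro _
      refine ⟨0, ?_, Or.inr rfl⟩
      have : neI K G (fun u v => key u < 0 ∧ key v < 0) = ⊥ := by
        rw [eq_bot_iff]; apply neI_le; intro u v _ _ h; omega
      rw [this]; exact pdlt_bot
    | succ j ih =>
      intro hj
      obtain ⟨P, hP, hPp⟩ := ih (by omega)
      obtain ⟨v, rfl⟩ := h.surj j (by omega)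
      have hlast : ∀ u, key u < key v + 1 → u ≠ v → key u < key v := by
        intro u hu huv
        have : key u ≠ key v := fun hh => huv (h.inj hh)
        omega
      have hrec := neI_rec (K := K) h v
      rw [hrec]
      have hIY : neI K G (fun a b => key a < key v ∧ key b < key v) ≤ varI K (Yset G key v) := by
        apply neI_le
        rintro a b hab hn ⟨ha, hb⟩
        by_cases hva : G.Adj v a
        · have hvb : ¬ G.Adj v b := fun hvb => hn (h.peo v a b ha hb hva hvb hab)
          exact Ideal.mul_mem_left _ _ (X_mem_varI (mem_Yset.2 ⟨hb, hvb⟩))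
        · exact Ideal.mul_mem_right _ _ (X_mem_varI (mem_Yset.2 ⟨ha, hva⟩))
      rcases (Yset G key v).eq_empty_or_nonempty with hE | hE
      · refine ⟨P, ?_, by omega⟩
        rw [hE, varI_empty, Ideal.mul_bot, sup_bot_eq]
        exact hP
      · have hq := hp v hE
        have hq1 : 1 ≤ (Yset G key v).card := Finset.card_pos.2 hE
        refine ⟨max (P + 1) (Yset G key v).card, ?_, Or.inl ?_⟩
        · refine pdlt_step hIY ?_ (PDLT.mono hP (le_max_left _ _))
            (PDLT.mono (pdlt_varI (Yset G key v)) (by omega))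
          intro r hr
          refine monI_reg ?_ r hr
          rintro _ ⟨a, b, hab, hn, ⟨ha, hb⟩, rfl⟩
          have hav : a ≠ v := by rintro rfl; exact lt_irrefl _ ha
          have hbv : b ≠ v := by rintro rfl; exact lt_irrefl _ hb
          simp [Finsupp.single_apply, hav, hbv]
        · have := h.lt v
          omega
  obtain ⟨P, hP, hPp⟩ := main _ le_rfl
  have heq : neI K G (fun u v => key u < Fintype.card V ∧ key v < Fintype.card V) = neI K G (fun _ _ => True) := by
    congr 1
    funext u v
    simp [h.lt]
  rw [heq] at hP
  exact PDLT.mono hP (by omega)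

theorem ara_upper {G : SimpleGraph V} {key : V → ℕ} (h : PEO G key) (p : ℕ)
    (hp : ∀ v, (Yset G key v).Nonempty → (Fintype.card V - 1 - key v) + (Yset G key v).card ≤ p) :
    ∃ g : Fin p → MvPolynomial V K, (Ideal.span (Set.range g)).radical = (neI K G (fun _ _ => True)).radical := by
  classical
  let x : ℕ → MvPolynomial V K := fun n => ∑ v ∈ Finset.univ.filter (fun v => key v = n), X v
  have hx : ∀ v, x (key v) = X v := by
    intro v
    have : Finset.univ.filter (fun w => key w = key v) = {v} := by
      ext w; simp [h.inj.eq_iff]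
    simp only [x, this, Finset.sum_singleton]
  let A : ℕ → ℕ → Prop := fun j i => ∃ u v, key u = j ∧ key v = i ∧ G.Adj u v
  have hA : ∀ u v, A (key u) (key v) ↔ G.Adj u v := by
    intro u v
    constructor
    · rintro ⟨u', v', hu, hv, hh⟩
      rwa [h.inj hu, h.inj hv] at hh
    · intro hh; exact ⟨u, v, rfl, rfl, hh⟩
  have hA1 : ∀ j < Fintype.card V, ∀ i < j, ∀ k < j, A j i → A j k → k < i → A i k := by
    intro j hj i hi k hk hji hjk hki
    obtain ⟨u, rfl⟩ := h.surj j hj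
    obtain ⟨v, rfl⟩ := h.surj i (by omega)
    obtain ⟨w, rfl⟩ := h.surj k (by omega)
    rw [hA] at hji hjk ⊢
    exact h.peo u v w hi hk hji hjk (by rintro rfl; exact lt_irrefl _ hki)
  have hp1 : ∀ j < Fintype.card V, ∀ Y : Finset ℕ, (∀ i ∈ Y, i < j ∧ ¬ A j i) → Y.Nonempty → (Fintype.card V - 1 - j) + Y.card ≤ p := by
    intro j hj Y hY hYn
    obtain ⟨u, rfl⟩ := h.surj j hj
    have hsub : Y ⊆ (Yset G key u).image key := by
      intro i hi
      obtain ⟨h1, h2⟩ := hY i hi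
      obtain ⟨v, rfl⟩ := h.surj i (by omega)
      rw [hA] at h2
      exact Finset.mem_image.2 ⟨v, mem_Yset.2 ⟨h1, h2⟩, rfl⟩
    have hc : Y.card ≤ (Yset G key u).card := (Finset.card_le_card hsub).trans Finset.card_image_le
    have hne : (Yset G key u).Nonempty := by
      obtain ⟨i, hi⟩ := hYn
      obtain ⟨v, hv, _⟩ := Finset.mem_image.1 (hsub hi)
      exact ⟨v, hv⟩
    have := hp u hne
    omega
  obtain ⟨g, hg⟩ := schmitt_vogel x A (Fintype.card V) p hA1 hp1
  · refine ⟨g, hg.trans ?_⟩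
    congr 1
    apply le_antisymm
    · rw [Ideal.span_le]
      rintro _ ⟨j, i, hj, hij, hn, rfl⟩
      obtain ⟨u, rfl⟩ := h.surj j hj
      obtain ⟨v, rfl⟩ := h.surj i (by omega)
      rw [hA] at hn
      rw [hx, hx]
      exact mem_neI_of (by rintro rfl; exact lt_irrefl _ hij) hn trivial
    · apply neI_le
      intro u v huv hn _
      have hne : key u ≠ key v := fun hh => huv (h.inj hh)
      rcases lt_or_gt_of_ne hne with hlt | hlt
      · refine Ideal.subset_span ⟨key v, key u, h.lt _, hlt, ?_, ?_⟩
        · rw [hA]; exact fun hh => hn hh.symm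
        · rw [hx, hx, mul_comm]
      · refine Ideal.subset_span ⟨key u, key v, h.lt _, hlt, ?_, ?_⟩
        · rw [hA]; exact hn
        · rw [hx, hx]

theorem exists_sep {G : SimpleGraph V} {key : V → ℕ} (h : PEO G key) (v b : V) (hb : b ∈ Yset G key v) :
    ∃ A B : Finset V, v ∈ A ∧ b ∈ B ∧ Disjoint A B ∧ (∀ x ∈ A, x ∉ Fset G key v) ∧ (∀ x ∈ B, x ∉ Fset G key v) ∧
      (∀ x, x ∉ Fset G key v → x ∈ A ∨ x ∈ B) ∧ (∀ x ∈ A, ∀ y ∈ B, ¬ G.Adj x y) := by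
  have main : ∀ n ≥ key v + 1, n ≤ Fintype.card V → ∃ A B : Finset V, v ∈ A ∧ b ∈ B ∧ Disjoint A B ∧
      (∀ x ∈ A, x ∉ Fset G key v ∧ key x < n) ∧ (∀ x ∈ B, x ∉ Fset G key v ∧ key x < n) ∧
      (∀ x, key x < n → x ∉ Fset G key v → x ∈ A ∨ x ∈ B) ∧ (∀ x ∈ A, ∀ y ∈ B, ¬ G.Adj x y) := by
    intro n hn
    induction n, hn using Nat.le_induction with
    | base =>
      intro _
      refine ⟨{v}, Yset G key v, by simp, hb, ?_, ?_, ?_, ?_, ?_⟩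
      · simp [mem_Yset]
      · simp [mem_Fset]
      · intro x hx
        rw [mem_Yset] at hx
        exact ⟨fun hh => hx.2 (mem_Fset.1 hh).2, by omega⟩
      · intro x hx hxF
        by_cases hxv : x = v
        · exact Or.inl (by simp [hxv])
        · right
          have : key x ≠ key v := fun hh => hxv (h.inj hh)
          refine mem_Yset.2 ⟨by omega, fun hh => hxF (mem_Fset.2 ⟨by omega, hh⟩)⟩
      · intro x hx y hy
        rw [Finset.mem_singleton] at hx
        subst hx
        exact (mem_Yset.1 hy).2
    | succ n hn ih =>
      intro hnN
      obtain ⟨A, B, hA1, hB1, hd, hA2, hB2, hun, hsep⟩ := ih (by omega)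
      obtain ⟨w, rfl⟩ := h.surj n (by omega)
      have hwA : w ∉ A := fun hh => lt_irrefl _ (hA2 w hh).2
      have hwB : w ∉ B := fun hh => lt_irrefl _ (hB2 w hh).2
      have hwF : w ∉ Fset G key v := by
        intro hh
        have := (mem_Fset.1 hh).1
        omega
      have hcov : ∀ x, key x < key w + 1 → x ∉ Fset G key v → x = w ∨ x ∈ A ∨ x ∈ B := by
        intro x hx hxF
        by_cases hxw : x = w
        · exact Or.inl hxw
        · have : key x ≠ key w := fun hh => hxw (h.inj hh)
          exact Or.inr (hun x (by omega) hxF)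
      have hA3 : ∀ x ∈ A, x ∉ Fset G key v ∧ key x < key w + 1 := fun x hx => ⟨(hA2 x hx).1, by have := (hA2 x hx).2; omega⟩
      have hB3 : ∀ x ∈ B, x ∉ Fset G key v ∧ key x < key w + 1 := fun x hx => ⟨(hB2 x hx).1, by have := (hB2 x hx).2; omega⟩
      by_cases hc : ∃ a ∈ A, G.Adj w a
      · obtain ⟨a, ha, hwa⟩ := hc
        refine ⟨insert w A, B, by simp [hA1], hB1, ?_, ?_, hB3, ?_, ?_⟩
        · rw [Finset.disjoint_insert_left]; exact ⟨hwB, hd⟩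
        · intro x hx
          rcases Finset.mem_insert.1 hx with rfl | hx
          · exact ⟨hwF, by omega⟩
          · exact hA3 x hx
        · intro x hx hxF
          rcases hcov x hx hxF with hh | hh | hh
          · left; simp [hh]
          · left; simp [hh]
          · right; exact hh
        · intro x hx y hy
          rcases Finset.mem_insert.1 hx with rfl | hx
          · intro hxy
            refine hsep a ha y hy (h.peo x a y (hA2 a ha).2 (hB2 y hy).2 hwa hxy ?_)
            rintro rfl
            exact Finset.disjoint_left.1 hd ha hy
          · exact hsep x hx y hy
      · push Not at hc
        refine ⟨A, insert w B, hA1, by simp [hB1], ?_, hA3, ?_, ?_, ?_⟩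
        · rw [Finset.disjoint_insert_right]; exact ⟨hwA, hd⟩
        · intro x hx
          rcases Finset.mem_insert.1 hx with rfl | hx
          · exact ⟨hwF, by omega⟩
          · exact hB3 x hx
        · intro x hx hxF
          rcases hcov x hx hxF with hh | hh | hh
          · right; simp [hh]
          · left; exact hh
          · right; simp [hh]
        · intro x hx y hy
          rcases Finset.mem_insert.1 hy with rfl | hy
          · exact fun hh => hc x hx hh.symm
          · exact hsep x hx y hy
  obtain ⟨A, B, h1, h2, h3, h4, h5, h6, h7⟩ := main (Fintype.card V) (h.lt v) le_rfl
  exact ⟨A, B, h1, h2, h3, fun x hx => (h4 x hx).1, fun x hx => (h5 x hx).1, fun x hx => h6 x (h.lt x) hx, h7⟩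

theorem lower_bounds {G : SimpleGraph V} {key : V → ℕ} (h : PEO G key) (v : V) (hv : (Yset G key v).Nonempty) :
    (∀ m, PDLT (neI K G (fun _ _ => True)) (m + 1) → (Fintype.card V - 1 - key v) + (Yset G key v).card ≤ m) ∧
    (∀ s (g : Fin s → MvPolynomial V K), (Ideal.span (Set.range g)).radical = (neI K G (fun _ _ => True)).radical →
      (Fintype.card V - 1 - key v) + (Yset G key v).card ≤ s) := by
  obtain ⟨b, hb⟩ := hv
  obtain ⟨A, B, hvA, hbB, hd, hAF, hBF, hun, hsep⟩ := exists_sep h v b hb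
  have hcl := h.card_lt v
  have hlt := h.lt v
  have hAB : ∀ x ∈ A, ∀ y ∈ B, (X x * X y : MvPolynomial V K) ∈ neI K G (fun _ _ => True) := by
    intro x hx y hy
    exact mem_neI_of (by rintro rfl; exact Finset.disjoint_left.1 hd hx hy) (hsep x hx y hy) trivial
  have huniv : Fset G key v ∪ A ∪ B = Finset.univ := by
    ext x
    simp only [Finset.mem_union, Finset.mem_univ, iff_true]
    by_cases hx : x ∈ Fset G key v
    · exact Or.inl (Or.inl hx)
    · rcases hun x hx with hh | hh
      · exact Or.inl (Or.inr hh)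
      · exact Or.inr hh
  have hcard : (Fset G key v).card + (A.card + B.card) = Fintype.card V := by
    rw [← Finset.card_union_of_disjoint hd, ← Finset.card_union_of_disjoint, ← Finset.union_assoc, huniv, Finset.card_univ]
    rw [Finset.disjoint_left]
    intro x hx hx2
    rcases Finset.mem_union.1 hx2 with hh | hh
    · exact hAF x hh hx
    · exact hBF x hh hx
  constructor
  · intro m hm
    have := pd_lower (neI K G (fun _ _ => True)) A B hd v b hvA hbB
      (fun p hp w => coeff_neI_single hp w) hAB m hm
    omega
  · intro s g hg
    have := ara_lower (neI K G (fun _ _ => True)) A B (Fset G key v) huniv v b hvA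
      (Finset.disjoint_left.1 hd hvA) (hAF v hvA) hbB (fun hh => Finset.disjoint_left.1 hd hh hbB) (hBF b hbB)
      (fun w => neI_le (fun x y hxy _ _ => by
        by_cases hxw : x = w
        · refine Ideal.mul_mem_left _ _ (X_mem_varI ?_)
          simp only [Finset.mem_erase, Finset.mem_univ, and_true]
          rintro rfl; exact hxy hxw
        · refine Ideal.mul_mem_right _ _ (X_mem_varI ?_)
          simp [hxw])) hAB s g hg
    omega

theorem exists_p {G : SimpleGraph V} {key : V → ℕ} (h : PEO G key) : ∃ p : ℕ,
    PDLT (neI K G (fun _ _ => True)) (p + 1) ∧ (∀ m, PDLT (neI K G (fun _ _ => True)) (m + 1) → p ≤ m) ∧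
    (∃ g : Fin p → MvPolynomial V K, (Ideal.span (Set.range g)).radical = (neI K G (fun _ _ => True)).radical) ∧
    (∀ s (g : Fin s → MvPolynomial V K), (Ideal.span (Set.range g)).radical = (neI K G (fun _ _ => True)).radical →
      p ≤ s) := by
  classical
  by_cases hE : ∃ v, (Yset G key v).Nonempty
  · obtain ⟨v, hv, hmax⟩ := Finset.exists_max_image (Finset.univ.filter (fun v => (Yset G key v).Nonempty))
      (fun v => (Fintype.card V - 1 - key v) + (Yset G key v).card)
      (by obtain ⟨v, hv⟩ := hE; exact ⟨v, by simp [hv]⟩)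
    have hv' := (Finset.mem_filter.1 hv).2
    have hp : ∀ w, (Yset G key w).Nonempty → (Fintype.card V - 1 - key w) + (Yset G key w).card ≤
      (Fintype.card V - 1 - key v) + (Yset G key v).card := fun w hw => hmax w (by simp [hw])
    obtain ⟨l1, l2⟩ := lower_bounds (K := K) h v hv'
    exact ⟨_, pd_upper h _ hp, l1, ara_upper h _ hp, l2⟩
  · push Not at hE
    have hp : ∀ w, (Yset G key w).Nonempty → (Fintype.card V - 1 - key w) + (Yset G key w).card ≤ 0 := by
      intro w hw; exact (hw.ne_empty (hE w)).elim
    exact ⟨0, pd_upper h _ hp, fun _ _ => Nat.zero_le _, ara_upper h _ hp, fun _ _ _ => Nat.zero_le _⟩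

theorem main_thm (K : Type*) [Field K]
    (Δ : Set (Finset V)) (hΔ : IsSimplicialComplex Δ) (hlin : HasTwoLinearResolution K Δ) :
    ara (srIdeal K Δ) = projDim (ModuleCat.of (MvPolynomial V K) (MvPolynomial V K ⧸ srIdeal K Δ)) := by
  have hI := srIdeal_eq_neI hΔ hlin
  have hG : NoBad (skel Δ) := fun a u v B h1 h2 h3 h4 h5 h6 bu bv h7 h8 h9 h10 =>
    no_cycle hlin hI a u v B h1 h2 h3 h4 h5 h6 bu bv h7 h8 h9 h10
  obtain ⟨key, k1, k2, k3⟩ := exists_peo (skel Δ) hG _ Finset.univ rfl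
  have hpeo : PEO (skel Δ) key :=
    ⟨fun x y hxy => k1 (by simp) (by simp) hxy, fun v => k2 v (Finset.mem_univ _),
      fun s x y => k3 s (Finset.mem_univ _) x (Finset.mem_univ _) y (Finset.mem_univ _)⟩
  obtain ⟨p, p1, p2, p3, p4⟩ := exists_p (K := K) hpeo
  rw [← hI] at p1 p2 p3 p4
  have e1 : ara (srIdeal K Δ) = p := by
    apply le_antisymm
    · exact Nat.sInf_le p3
    · exact le_csInf ⟨p, p3⟩ (fun s ⟨g, hg⟩ => p4 s g hg)
  have hres := res_of_pd p _ p1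
  have e2 : projDim (ModuleCat.of (MvPolynomial V K) (MvPolynomial V K ⧸ srIdeal K Δ)) = p := by
    apply le_antisymm
    · exact Nat.sInf_le hres
    · exact le_csInf ⟨p, hres⟩ (fun m ⟨P, hP⟩ => p2 m (pd_of_res P m hP))
  rw [e1, e2]

end PartM


/-- STATEMENT 14 (Corollary 3, Morales): for `K` algebraically closed, if `K[Δ]` has a
2-linear resolution then `ara I_Δ = pd K[Δ]`. -/
theorem ara_eq_projDim_of_twoLinear {V : Type*} [Fintype V] [DecidableEq V]
    (K : Type*) [Field K] [IsAlgClosed K]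
    (Δ : Set (Finset V)) (hΔ : IsSimplicialComplex Δ)
    (hlin : HasTwoLinearResolution K Δ) :
    ara (srIdeal K Δ) =
      projDim (ModuleCat.of (MvPolynomial V K) (MvPolynomial V K ⧸ srIdeal K Δ)) := by
  exact main_thm K Δ hΔ hlin
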